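/- arXiv:2106.16165 — 2 statements merged into one kernel-verified Lean document; each statement's English description precedes it below -/
import Mathlib

section
/- Key lower bound: let a, b, c be pairwise coprime positive integers with a + b = c, not, up to order, of the form (1,8,9) or (1, N, q) with q prime. Set r = ω(abc) − 1. Let ψ₁, …, ψ_{r−1} ∈ 𝒯°(a,b) be ℤ-linearly independent derivations (so a and b are ψ_i-dependent for each i). Suppose there is a real number M with 1 < M < 2 and c < rad(abc)^M, and set μ = (2 − M)/(4M). Then ∏_{i=1}^{r−1} ‖ψ_i‖ ≥ c^μ / ∏_{p | abc} v_p(abc). -/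
open Finset

/-- The arithmetic derivative attached to `ψ`: `d^ψ(n) = Σ_{p ∣ n} (n·v_p(n)/p)·ψ(p)`,
with `d^ψ(0) = 0` (empty sum). Each term is written as `(n/p)·v_p(n)·ψ(p)`, exact since `p ∣ n`. -/
def dpsi (ψ : ℕ → ℤ) (n : ℤ) : ℤ :=
  ∑ p ∈ n.natAbs.primeFactors, (n / (p : ℤ)) * (n.natAbs.factorization p : ℤ) * ψ p

/-- A derivation: a function on primes (zero off primes) with finite norm. -/
def IsDeriv (ψ : ℕ → ℤ) : Prop :=
  (∀ p : ℕ, ¬ p.Prime → ψ p = 0) ∧ ∃ B : ℤ, ∀ p : ℕ, |ψ p| ≤ B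

/-- The norm `‖ψ‖ = sup_p |ψ(p)|`. -/
noncomputable def dNorm (ψ : ℕ → ℤ) : ℝ := ⨆ p : ℕ, (|ψ p| : ℝ)

/-- Membership in `𝒯(a,b)`: a derivation supported on the primes dividing `ab(a+b)`
satisfying `d^ψ(a+b) = d^ψ(a) + d^ψ(b)`. -/
def MemT (a b : ℕ) (ψ : ℕ → ℤ) : Prop :=
  IsDeriv ψ ∧ (∀ p : ℕ, p.Prime → ¬ p ∣ (a * b * (a + b)) → ψ p = 0) ∧
    dpsi ψ ((a : ℤ) + (b : ℤ)) = dpsi ψ (a : ℤ) + dpsi ψ (b : ℤ)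

/-- The `ψ`-Wronskian `W^ψ(a,b) = a·d^ψ(b) − b·d^ψ(a)`. -/
def Wpsi (ψ : ℕ → ℤ) (a b : ℤ) : ℤ := a * dpsi ψ b - b * dpsi ψ a

/-- Membership in `𝒯°(a,b)`: elements of `𝒯(a,b)` for which `a, b` are `ψ`-dependent. -/
def MemT0 (a b : ℕ) (ψ : ℕ → ℤ) : Prop := MemT a b ψ ∧ Wpsi ψ (a : ℤ) (b : ℤ) = 0

/-- The radical of `n`: product of the distinct primes dividing `n`. -/
def radN (n : ℕ) : ℕ := ∏ p ∈ n.primeFactors, p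

/-- The Small Derivatives Conjecture with exponent `η`: for all but finitely many triples of
coprime positive integers `(a,b,c)` with `a+b=c`, not of the form `(1,N,q)` with `q` prime
up to order, there is `ψ ∈ 𝒯(a,b)` with `a,b` `ψ`-independent and `‖ψ‖ < c^η`. -/
def SDC (η : ℝ) : Prop :=
  {t : ℕ × ℕ × ℕ | 0 < t.1 ∧ 0 < t.2.1 ∧ t.1 + t.2.1 = t.2.2 ∧ Nat.Coprime t.1 t.2.1 ∧
    ¬ (∃ N q : ℕ, q.Prime ∧ ({t.1, t.2.1, t.2.2} : Multiset ℕ) = {1, N, q}) ∧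
    ¬ ∃ ψ : ℕ → ℤ, MemT t.1 t.2.1 ψ ∧ Wpsi ψ (t.1 : ℤ) (t.2.1 : ℤ) ≠ 0 ∧
      dNorm ψ < (t.2.2 : ℝ) ^ η}.Finite

theorem cat_odd (t : ℤ) (ht : Odd t) (k m : ℕ) (hk : Odd k) (h : (t ^ k - 1).natAbs = 2 ^ m) :
    (t ^ k - 1).natAbs = (t - 1).natAbs := by
  have hs := geom_sum_mul t k
  set s := ∑ i ∈ Finset.range k, t ^ i with hsdef
  have hodd : Odd s := by
    have key : ∀ j : ℕ, Even (∑ i ∈ Finset.range j, t ^ i) ↔ Even j := by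
      intro j
      induction j with
      | zero => simp
      | succ j ih =>
        have : ¬ Even (t ^ j) := Int.not_even_iff_odd.2 ht.pow
        rw [Finset.sum_range_succ, Int.even_add, ih, Nat.even_add_one]
        tauto
    rw [hsdef, ← Int.not_even_iff_odd, key]
    exact Nat.not_even_iff_odd.2 hk
  have hd : s.natAbs ∣ 2 ^ m := by
    rw [← h, ← hs, Int.natAbs_mul]; exact dvd_mul_right _ _
  have h1 : s.natAbs = 1 := by
    have hc : Nat.Coprime s.natAbs (2 ^ m) := by
      apply Nat.Coprime.pow_right
      exact (Nat.coprime_two_right).2 (Int.natAbs_odd.2 hodd)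
    exact Nat.Coprime.eq_one_of_dvd hc hd
  rw [← hs, Int.natAbs_mul, h1, one_mul]

theorem cat_one (q k m : ℕ) (hq : Odd q) (hq3 : 3 ≤ q) (hk : 2 ≤ k)
    (h : 2 ^ m + 1 = q ^ k) : 2 ^ m = 8 := by
  rcases Nat.even_or_odd k with he | ho
  · obtain ⟨j, rfl⟩ := he
    have hw : 3 ≤ q ^ j := by
      calc 3 ≤ q := hq3
        _ ≤ q ^ j := Nat.le_self_pow (by omega) q
    obtain ⟨w, hw'⟩ : ∃ w, q ^ j = w + 1 := ⟨q ^ j - 1, by omega⟩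
    rw [pow_add, hw'] at h
    have h2 : w * (w + 2) = 2 ^ m := by nlinarith
    obtain ⟨i, _, hi⟩ := (Nat.dvd_prime_pow Nat.prime_two).1 (Dvd.intro _ h2)
    obtain ⟨l, _, hl⟩ := (Nat.dvd_prime_pow Nat.prime_two).1 (Dvd.intro_left _ h2)
    have hw2 : w = 2 := by
      rcases i with _ | _ | i
      · simp at hi; omega
      · simpa using hi
      · rcases l with _ | _ | l
        · simp at hl
        · simp at hl; omega
        · rw [pow_succ, pow_succ] at hi hl; omega
    rw [← h2, hw2]
  · exfalso
    have e : ((q : ℤ) ^ k - 1) = ((2 ^ m : ℕ) : ℤ) := by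
      have : ((2 ^ m + 1 : ℕ) : ℤ) = ((q ^ k : ℕ) : ℤ) := by rw [h]
      push_cast at this ⊢; linarith
    have := cat_odd q (by exact_mod_cast hq) k m ho (by rw [e]; rfl)
    rw [e] at this
    have h4 : q * q ≤ q ^ k := by
      rw [← sq]; exact Nat.pow_le_pow_right (by omega) hk
    have h5 : q < q * q := by nlinarith
    have h6 : (2 ^ m : ℕ) = ((q : ℤ) - 1).natAbs := by simpa using this
    omega

theorem cat_two (q k m : ℕ) (hq : Odd q) (hq3 : 3 ≤ q) (hk : 2 ≤ k) (hm : 2 ≤ m)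
    (h : q ^ k + 1 = 2 ^ m) : False := by
  rcases Nat.even_or_odd k with he | ho
  · obtain ⟨j, rfl⟩ := he
    have h4 : 4 ∣ 2 ^ m := by
      have := Nat.pow_dvd_pow 2 hm
      simpa using this
    have hodd : Odd (q ^ j) := hq.pow
    obtain ⟨u, hu⟩ := hodd
    rw [← h, pow_add, hu] at h4
    have : (2 * u + 1) * (2 * u + 1) + 1 = 4 * (u * u + u) + 2 := by ring
    omega
  · have e : ((-q : ℤ) ^ k - 1) = -((2 ^ m : ℕ) : ℤ) := by
      have : ((q ^ k + 1 : ℕ) : ℤ) = ((2 ^ m : ℕ) : ℤ) := by rw [h]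
      rw [ho.neg_pow]
      push_cast at this ⊢; linarith
    have := cat_odd (-q) (by simpa using hq) k m ho (by rw [e, Int.natAbs_neg]; rfl)
    rw [e] at this
    have h4 : q * q ≤ q ^ k := by
      rw [← sq]; exact Nat.pow_le_pow_right (by omega) hk
    have h5 : q < q * q := by nlinarith
    have h6 : (2 ^ m : ℕ) = (-(q : ℤ) - 1).natAbs := by
      rw [← this, Int.natAbs_neg]; rfl
    omega

theorem three_rad (N q s : ℕ) (hN : N ≠ 0) (hq : q.Prime) (hs : s.Prime) (hq2 : q ≠ 2)
    (hs2 : s ≠ 2) (hqs : q ≠ s) (d2 : 2 ∣ N) (dq : q ∣ N) (ds : s ∣ N) :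
    2 * q * s ≤ radN N := by
  have hsub : ({2, q, s} : Finset ℕ) ⊆ N.primeFactors := by
    intro t ht
    simp only [Finset.mem_insert, Finset.mem_singleton] at ht
    rcases ht with rfl | rfl | rfl <;> simp [*, Nat.prime_two]
  have : ∏ p ∈ ({2, q, s} : Finset ℕ), p = 2 * q * s := by
    rw [Finset.prod_insert (by simp; exact ⟨Ne.symm hq2, Ne.symm hs2⟩),
      Finset.prod_insert (by simpa using hqs), Finset.prod_singleton, mul_assoc]
  rw [← this]
  exact Finset.prod_le_prod_of_subset_of_one_le' hsub
    (fun i hi _ => (Nat.prime_of_mem_primeFactors hi).one_lt.le)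

/-- final estimate from three primes -/
theorem fin_est (N q s c : ℕ) (hN : N ≠ 0) (hq : q.Prime) (hs : s.Prime) (hq2 : q ≠ 2)
    (hs2 : s ≠ 2) (hqs : q ≠ s) (d2 : 2 ∣ N) (dq : q ∣ N) (ds : s ∣ N)
    (h : 4 * q ^ 2 ≤ s ^ 2 * c) : 16 * q ^ 4 ≤ radN N ^ 2 * c := by
  have h3 := three_rad N q s hN hq hs hq2 hs2 hqs d2 dq ds
  calc 16 * q ^ 4 = 4 * q ^ 2 * (4 * q ^ 2) := by ring
    _ ≤ 4 * q ^ 2 * (s ^ 2 * c) := by gcongr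
    _ = (2 * q * s) ^ 2 * c := by ring
    _ ≤ _ := by gcongr

/-- `z = 1` case: `x` even, `y` odd consecutive. -/
theorem case_one (x y c : ℕ) (hx : Even x) (hy : Odd y) (hx0 : 0 < x) (hy1 : 1 < y)
    (hyc : y ≤ c) (hc : 4 ≤ c) (hxp : ¬ x.Prime) (hyp : ¬ y.Prime)
    (h : x + 1 = y ∨ y + 1 = x) (h8 : x ≠ 8) :
    ∃ q, q.Prime ∧ q ∣ y ∧ 16 * q ^ 4 ≤ radN (x * y) ^ 2 * c := by
  have d2 : 2 ∣ x := hx.two_dvd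
  have hN : x * y ≠ 0 := by positivity
  have hqp := Nat.minFac_prime (n := y) (by omega)
  have hqd := Nat.minFac_dvd y
  refine ⟨y.minFac, hqp, hqd, ?_⟩
  set q := y.minFac with hqdef
  have oddp : ∀ s, s ∣ y → s ≠ 2 := by
    rintro s hs rfl
    exact (Nat.not_even_iff_odd.2 hy) (even_iff_two_dvd.2 hs)
  have hq2 := oddp q hqd
  have hq3 : 3 ≤ q := by have := hqp.two_le; omega
  by_cases hys : ∃ s, s.Prime ∧ s ∣ y ∧ s ≠ q
  · obtain ⟨s, hs, hsd, hsq⟩ := hys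
    refine fin_est _ q s c hN hqp hs hq2 (oddp s hsd) (Ne.symm hsq) (d2.mul_right _)
      (hqd.mul_left _) (hsd.mul_left _) ?_
    have : q ≤ s := Nat.minFac_le_of_dvd hs.two_le hsd
    calc 4 * q ^ 2 = q ^ 2 * 4 := by ring
      _ ≤ s ^ 2 * c := by gcongr
  · push Not at hys
    have hyk : y = q ^ y.primeFactorsList.length :=
      Nat.eq_prime_pow_of_unique_prime_dvd (by omega) (fun {d} hd hdy => hys d hd hdy)
    set k := y.primeFactorsList.length
    have hk : 2 ≤ k := by
      rcases hk' : k with _ | _ | k'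
      · rw [hk'] at hyk; simp at hyk; omega
      · rw [hk'] at hyk; simp at hyk; rw [hyk] at hyp; exact absurd hqp hyp
      · omega
    have hqc : q ^ 2 ≤ c := by
      calc q ^ 2 ≤ q ^ k := Nat.pow_le_pow_right (by omega) hk
        _ = y := hyk.symm
        _ ≤ c := hyc
    by_cases hxs : ∃ s, s.Prime ∧ s ∣ x ∧ s ≠ 2
    · obtain ⟨s, hs, hsd, hs2⟩ := hxs
      have hco : Nat.Coprime x y := by
        rcases h with rfl | rfl <;> simp
      have hqs : q ≠ s := by
        intro e
        rw [← e] at hsd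
        exact Nat.not_coprime_of_dvd_of_dvd hqp.one_lt hsd hqd hco
      refine fin_est _ q s c hN hqp hs hq2 hs2 hqs (d2.mul_right _)
        (hqd.mul_left _) (hsd.mul_right _) ?_
      have : 3 ≤ s := by have := hs.two_le; omega
      calc 4 * q ^ 2 ≤ 3 ^ 2 * c := by omega
        _ ≤ s ^ 2 * c := by gcongr
    · exfalso
      push Not at hxs
      have hxk : x = 2 ^ x.primeFactorsList.length :=
        Nat.eq_prime_pow_of_unique_prime_dvd (by omega) (fun {d} hd hdy => hxs d hd hdy)
      set m := x.primeFactorsList.length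
      have hm : 2 ≤ m := by
        rcases hm' : m with _ | _ | m'
        · rw [hm'] at hxk; simp at hxk; rw [hxk] at hx; simp at hx
        · rw [hm'] at hxk; simp at hxk; rw [hxk] at hxp; exact absurd Nat.prime_two hxp
        · omega
      have hqo : Odd q := Odd.of_dvd_nat hy hqd
      rcases h with h | h
      · rw [hxk] at h
        exact h8 (hxk.trans (cat_one q k m hqo hq3 hk (h.trans hyk)))
      · exact cat_two q k m hqo hq3 hk hm (by rw [← hyk, ← hxk, h])

/-- both odd parts nontrivial -/
theorem case_two (x y z c : ℕ) (hx : Even x) (hy : Odd y) (hz : Odd z) (hx0 : 0 < x)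
    (hy1 : 1 < y) (hz1 : 1 < z) (hyz : Nat.Coprime y z) (hc : 4 ≤ c) :
    ∃ q, q.Prime ∧ (q ∣ y ∨ q ∣ z) ∧ 16 * q ^ 4 ≤ radN (x * y * z) ^ 2 * c := by
  have d2 : 2 ∣ x := hx.two_dvd
  have hN : x * y * z ≠ 0 := by positivity
  have hqp := Nat.minFac_prime (n := y) (by omega)
  have hqd := Nat.minFac_dvd y
  have hsp := Nat.minFac_prime (n := z) (by omega)
  have hsd := Nat.minFac_dvd z
  set q := y.minFac
  set s := z.minFac
  have hq2 : q ≠ 2 := by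
    intro e; rw [e] at hqd
    exact (Nat.not_even_iff_odd.2 hy) (even_iff_two_dvd.2 hqd)
  have hs2 : s ≠ 2 := by
    intro e; rw [e] at hsd
    exact (Nat.not_even_iff_odd.2 hz) (even_iff_two_dvd.2 hsd)
  have hqs : q ≠ s := by
    intro e
    rw [← e] at hsd
    exact Nat.not_coprime_of_dvd_of_dvd hqp.one_lt hqd hsd hyz
  rcases le_total q s with hle | hle
  · refine ⟨q, hqp, Or.inl hqd, fin_est _ q s c hN hqp hsp hq2 hs2 hqs
      ((d2.mul_right _).mul_right _) ((hqd.mul_left _).mul_right _) (hsd.mul_left _) ?_⟩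
    calc 4 * q ^ 2 = q ^ 2 * 4 := by ring
      _ ≤ s ^ 2 * c := by gcongr
  · refine ⟨s, hsp, Or.inr hsd, fin_est _ s q c hN hsp hqp hs2 hq2 hqs.symm
      ((d2.mul_right _).mul_right _) (hsd.mul_left _) ((hqd.mul_left _).mul_right _) ?_⟩
    calc 4 * s ^ 2 = s ^ 2 * 4 := by ring
      _ ≤ q ^ 2 * c := by gcongr

theorem dpsi_sum {ι : Type*} [Fintype ι] (v : ι → ℤ) (ψs : ι → ℕ → ℤ) (n : ℤ) :
    dpsi (∑ i, v i • ψs i) n = ∑ i, v i * dpsi (ψs i) n := by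
  unfold dpsi
  simp only [Finset.mul_sum, Finset.sum_apply, Pi.smul_apply, smul_eq_mul]
  rw [Finset.sum_comm]
  refine Finset.sum_congr rfl fun p _ => Finset.sum_congr rfl fun i _ => by ring

theorem dpsi_single (ψ : ℕ → ℤ) (x p : ℕ) (hx : 0 < x) (hp : p.Prime) (hpx : p ∣ x)
    (h0 : ∀ l, l ∣ x → l.Prime → l ≠ p → ψ l = 0) (hd : dpsi ψ (x : ℤ) = 0) : ψ p = 0 := by
  unfold dpsi at hd
  rw [Int.natAbs_natCast, Finset.sum_eq_single p] at hd
  · have h1 : (x : ℤ) / (p : ℤ) ≠ 0 := by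
      have : 0 < x / p := Nat.div_pos (Nat.le_of_dvd hx hpx) hp.pos
      exact_mod_cast this.ne'
    have h2 : (x.factorization p : ℤ) ≠ 0 := by
      have := hp.factorization_pos_of_dvd hx.ne' hpx
      exact_mod_cast this.ne'
    rcases mul_eq_zero.1 hd with h | h
    · exact absurd h (mul_ne_zero h1 h2)
    · exact h
  · intro l hl hlp
    rw [h0 l (Nat.dvd_of_mem_primeFactors hl) (Nat.prime_of_mem_primeFactors hl) hlp, mul_zero]
  · intro h
    exact absurd (Nat.mem_primeFactors.2 ⟨hp, hpx, hx.ne'⟩) h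

theorem dpsi_dvd (ψ : ℕ → ℤ) (x p : ℕ) (hx : 0 < x) (hp : p.Prime) (hpx : p ∣ x)
    (hd : (x : ℤ) ∣ dpsi ψ (x : ℤ)) : (p : ℤ) ∣ (x.factorization p : ℤ) * ψ p := by
  obtain ⟨m, hm⟩ := Nat.ordProj_dvd x p
  set k := x.factorization p with hk
  have hk1 : 0 < k := hp.factorization_pos_of_dvd hx.ne' hpx
  have hmp : ¬ p ∣ m := by
    intro h
    have : p ^ (k + 1) ∣ x := by
      rw [hm, pow_succ]; exact mul_dvd_mul_left _ h
    have := (hp.pow_dvd_iff_le_factorization hx.ne').1 this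
    omega
  obtain ⟨j, hj⟩ : ∃ j, k = j + 1 := ⟨k - 1, by omega⟩
  unfold dpsi at hd
  rw [Int.natAbs_natCast,
    ← Finset.add_sum_erase _ _ (Nat.mem_primeFactors.2 ⟨hp, hpx, hx.ne'⟩)] at hd
  have hpk : ((p ^ k : ℕ) : ℤ) ∣ (x : ℤ) := by
    exact_mod_cast Nat.ordProj_dvd x p
  have hrest : ((p ^ k : ℕ) : ℤ) ∣ ∑ l ∈ x.primeFactors.erase p,
      ((x : ℤ) / (l : ℤ)) * (x.factorization l : ℤ) * ψ l := by
    refine Finset.dvd_sum fun l hl => ?_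
    obtain ⟨hlp, hl⟩ := Finset.mem_erase.1 hl
    have hlP := Nat.prime_of_mem_primeFactors hl
    have hlx := Nat.dvd_of_mem_primeFactors hl
    refine Dvd.dvd.mul_right (Dvd.dvd.mul_right ?_ _) _
    obtain ⟨w, hw⟩ := hlx
    have hxl : (x : ℤ) / (l : ℤ) = (w : ℤ) := by
      rw [hw]; push_cast
      exact Int.mul_ediv_cancel_left _ (by exact_mod_cast hlP.ne_zero)
    rw [hxl]
    have hc : Nat.Coprime (p ^ k) l :=
      Nat.Coprime.pow_left _ ((Nat.coprime_primes hp hlP).2 (Ne.symm hlp))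
    have : p ^ k ∣ l * w := hw ▸ Nat.ordProj_dvd x p
    exact_mod_cast hc.dvd_of_dvd_mul_left this
  have h1 := (dvd_add_left hrest).1 (hpk.trans hd)
  have hxp : (x : ℤ) / (p : ℤ) = (p : ℤ) ^ j * m := by
    have : (x : ℤ) = p * ((p : ℤ) ^ j * m) := by
      rw [hm, hj]; push_cast; ring
    rw [this]
    exact Int.mul_ediv_cancel_left _ (by exact_mod_cast hp.ne_zero)
  rw [hxp, ← hk] at h1
  have h2 : (p : ℤ) ^ j * p ∣ (p : ℤ) ^ j * (m * (k * ψ p)) := by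
    have e : ((p ^ k : ℕ) : ℤ) = (p : ℤ) ^ j * p := by rw [hj]; push_cast; ring
    rw [e] at h1
    have e2 : (p : ℤ) ^ j * (m * (k * ψ p)) = (p : ℤ) ^ j * m * k * ψ p := by ring
    rw [e2]; exact h1
  have h3 := (mul_dvd_mul_iff_left (pow_ne_zero j (by exact_mod_cast hp.ne_zero))).1 h2
  have hpi := Nat.prime_iff_prime_int.1 hp
  rcases hpi.dvd_or_dvd h3 with h | h
  · exact absurd (by exact_mod_cast h) hmp
  · exact h

/-- symmetric relations -/
def SymRel (x y z : ℕ) (ψ : ℕ → ℤ) : Prop :=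
  (x : ℤ) * dpsi ψ y = y * dpsi ψ x ∧ (x : ℤ) * dpsi ψ z = z * dpsi ψ x ∧
    (y : ℤ) * dpsi ψ z = z * dpsi ψ y

theorem symRel_sum {ι : Type*} [Fintype ι] (x y z : ℕ) (v : ι → ℤ) (ψs : ι → ℕ → ℤ)
    (h : ∀ i, SymRel x y z (ψs i)) : SymRel x y z (∑ i, v i • ψs i) := by
  unfold SymRel
  simp only [dpsi_sum, Finset.mul_sum]
  refine ⟨Finset.sum_congr rfl fun i _ => ?_, Finset.sum_congr rfl fun i _ => ?_,
    Finset.sum_congr rfl fun i _ => ?_⟩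
  · linear_combination v i * (h i).1
  · linear_combination v i * (h i).2.1
  · linear_combination v i * (h i).2.2

theorem SymRel.dvd {x y z : ℕ} {ψ : ℕ → ℤ} (h : SymRel x y z ψ) (hx : 0 < x) (hy : 0 < y)
    (hz : 0 < z) (hxy : Nat.Coprime x y) (hxz : Nat.Coprime x z) (hyz : Nat.Coprime y z)
    (p : ℕ) (hp : p.Prime) (hpd : p ∣ x * y * z) :
    (p : ℤ) ∣ ((x * y * z).factorization p : ℤ) * ψ p := by
  have key : ∀ u w : ℕ, 0 < u → 0 < w → Nat.Coprime u w → p ∣ u → u * w = x * y * z →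
      (u : ℤ) ∣ dpsi ψ u → (p : ℤ) ∣ ((x * y * z).factorization p : ℤ) * ψ p := by
    intro u w hu hw huw hpu he hd
    have hpw : ¬ p ∣ w := fun h' => Nat.not_coprime_of_dvd_of_dvd hp.one_lt hpu h' huw
    rw [← he, Nat.factorization_mul hu.ne' hw.ne', Finsupp.add_apply,
      Nat.factorization_eq_zero_of_not_dvd hpw, add_zero]
    exact dpsi_dvd ψ u p hu hp hpu hd
  rcases (hp.dvd_mul).1 hpd with h' | h'
  · rcases (hp.dvd_mul).1 h' with h' | h'
    · refine key x (y * z) hx (by positivity) (hxy.mul_right hxz) h' (by ring) ?_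
      exact IsCoprime.dvd_of_dvd_mul_left (Nat.isCoprime_iff_coprime.2 hxy) (Dvd.intro _ h.1)
    · refine key y (x * z) hy (by positivity) (hxy.symm.mul_right hyz) h' (by ring) ?_
      exact IsCoprime.dvd_of_dvd_mul_left (Nat.isCoprime_iff_coprime.2 hxy.symm)
        (Dvd.intro _ h.1.symm)
  · refine key z (x * y) hz (by positivity) (hxz.symm.mul_right hyz.symm) h' (by ring) ?_
    exact IsCoprime.dvd_of_dvd_mul_left (Nat.isCoprime_iff_coprime.2 hxz.symm)
        (Dvd.intro _ h.2.1.symm)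

theorem SymRel.inj {x y z : ℕ} {ψ : ℕ → ℤ} (h : SymRel x y z ψ) (hx : 0 < x) (hy : 0 < y)
    (hz : 0 < z) (hxy : Nat.Coprime x y) (hxz : Nat.Coprime x z) (hyz : Nat.Coprime y z)
    (p q : ℕ) (hp : p.Prime) (hq : q.Prime) (hpx : p ∣ x) (hqy : q ∣ y)
    (h0 : ∀ l, l ≠ p → l ≠ q → ψ l = 0) : ψ = 0 := by
  have nd : ∀ {l u w : ℕ}, l.Prime → Nat.Coprime u w → l ∣ u → l ∣ w → False :=
    fun hl huw h1 h2 => Nat.not_coprime_of_dvd_of_dvd hl.one_lt h1 h2 huw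
  have hzz : dpsi ψ z = 0 := by
    unfold dpsi
    refine Finset.sum_eq_zero fun l hl => ?_
    rw [Int.natAbs_natCast] at hl
    have hlz := Nat.dvd_of_mem_primeFactors hl
    rw [h0 l ?_ ?_, mul_zero]
    · rintro rfl; exact nd hp hxz hpx hlz
    · rintro rfl; exact nd hq hyz hqy hlz
  have hz' : (z : ℤ) ≠ 0 := by exact_mod_cast hz.ne'
  have hxx : dpsi ψ x = 0 := by
    have := h.2.1
    rw [hzz, mul_zero] at this
    exact (mul_eq_zero.1 this.symm).resolve_left hz'
  have hyy : dpsi ψ y = 0 := by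
    have := h.2.2
    rw [hzz, mul_zero] at this
    exact (mul_eq_zero.1 this.symm).resolve_left hz'
  have hp0 : ψ p = 0 := dpsi_single ψ x p hx hp hpx (fun l hlx hl hlp => h0 l hlp (by
    rintro rfl; exact nd hq hxy hlx hqy)) hxx
  have hq0 : ψ q = 0 := dpsi_single ψ y q hy hq hqy (fun l hly hl hlq => h0 l (by
    rintro rfl; exact nd hp hxy hpx hly) hlq) hyy
  funext l
  by_cases h1 : l = p
  · rw [h1, hp0]; rfl
  by_cases h2 : l = q
  · rw [h2, hq0]; rfl
  exact h0 l h1 h2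

theorem le_dNorm (ψ : ℕ → ℤ) (h : IsDeriv ψ) (p : ℕ) : ((|ψ p| : ℤ) : ℝ) ≤ dNorm ψ := by
  obtain ⟨B, hB⟩ := h.2
  have : BddAbove (Set.range fun p : ℕ => (|(ψ p : ℝ)|)) := by
    refine ⟨(B : ℝ), ?_⟩
    rintro _ ⟨p, rfl⟩
    have := hB p
    show |(ψ p : ℝ)| ≤ (B : ℝ)
    exact_mod_cast this
  have := le_ciSup this p
  unfold dNorm
  simpa using this

theorem core (x y z N : ℕ) (hN : N = x * y * z) (hx : 0 < x) (hy : 0 < y)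
    (hz : 0 < z) (hxy : Nat.Coprime x y) (hxz : Nat.Coprime x z) (hyz : Nat.Coprime y z)
    (p q : ℕ) (hp : p.Prime) (hq : q.Prime) (hpx : p ∣ x) (hqy : q ∣ y)
    (ψs : Fin (N.primeFactors.card - 2) → (ℕ → ℤ))
    (hD : ∀ i, IsDeriv (ψs i)) (hS : ∀ i, SymRel x y z (ψs i))
    (h0 : ∀ i l, l.Prime → ¬ l ∣ N → ψs i l = 0) (hLI : LinearIndependent ℤ ψs) :
    (radN N : ℝ) ≤ (p * q : ℕ) * ((∏ l ∈ N.primeFactors, (N.factorization l : ℝ)) *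
      ∏ i, dNorm (ψs i)) := by
  have hN0 : N ≠ 0 := by rw [hN]; positivity
  have hpq : p ≠ q := by
    rintro rfl; exact Nat.not_coprime_of_dvd_of_dvd hp.one_lt hpx hqy hxy
  have hpN : p ∈ N.primeFactors := Nat.mem_primeFactors.2
    ⟨hp, by rw [hN]; exact (hpx.mul_right _).mul_right _, hN0⟩
  have hqN : q ∈ N.primeFactors := Nat.mem_primeFactors.2
    ⟨hq, by rw [hN]; exact (hqy.mul_left _).mul_right _, hN0⟩
  have hqN' : q ∈ N.primeFactors.erase p := Finset.mem_erase.2 ⟨hpq.symm, hqN⟩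
  set S := (N.primeFactors.erase p).erase q with hS'
  have hcard : S.card = N.primeFactors.card - 2 := by
    rw [hS', Finset.card_erase_of_mem hqN', Finset.card_erase_of_mem hpN]; omega
  let e : Fin (N.primeFactors.card - 2) ≃ S := (finCongr hcard.symm).trans S.equivFin.symm
  let A : Matrix (Fin (N.primeFactors.card - 2)) (Fin (N.primeFactors.card - 2)) ℤ :=
    fun i j => ψs i (e j)
  have hdet : A.det ≠ 0 := by
    intro hdet
    obtain ⟨v, hv, hv0⟩ := Matrix.exists_vecMul_eq_zero_iff.2 hdet
    apply hv
    have hΨ : ∑ i, v i • ψs i = 0 := by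
      refine (symRel_sum x y z v ψs hS).inj hx hy hz hxy hxz hyz p q hp hq hpx hqy ?_
      intro l hlp hlq
      by_cases hl : l ∈ S
      · have := congrFun hv0 (e.symm ⟨l, hl⟩)
        simpa [Matrix.vecMul, dotProduct, A, Finset.sum_apply] using this
      · have hl' : l ∉ N.primeFactors := fun h => hl (Finset.mem_erase.2
          ⟨hlq, Finset.mem_erase.2 ⟨hlp, h⟩⟩)
        rw [Finset.sum_apply]
        refine Finset.sum_eq_zero fun i _ => ?_
        have : ψs i l = 0 := by
          by_cases hlP : l.Prime
          · exact h0 i l hlP fun hd => hl' (Nat.mem_primeFactors.2 ⟨hlP, hd, hN0⟩)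
          · exact (hD i).1 l hlP
        simp [this]
    funext i
    exact Fintype.linearIndependent_iff.1 hLI v hΨ i
  obtain ⟨σ, hσ⟩ : ∃ σ : Equiv.Perm (Fin (N.primeFactors.card - 2)),
      ∏ i, A (σ i) i ≠ 0 := by
    by_contra hcon
    push Not at hcon
    apply hdet
    rw [Matrix.det_apply]
    refine Finset.sum_eq_zero fun σ _ => ?_
    rw [hcon σ, smul_zero]
  have hne : ∀ i, ψs (σ i) (e i) ≠ 0 := fun i => by
    have := Finset.prod_ne_zero_iff.1 hσ i (Finset.mem_univ _)
    exact this
  have hSP : ∀ l ∈ S, l ∈ N.primeFactors := fun l hl =>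
    Finset.mem_of_mem_erase (Finset.mem_of_mem_erase hl)
  have hterm : ∀ i, (((e i : ℕ)) : ℝ) ≤ (N.factorization (e i) : ℝ) * dNorm (ψs (σ i)) := by
    intro i
    have hl := hSP _ (e i).2
    have hlP := Nat.prime_of_mem_primeFactors hl
    have hlN := Nat.dvd_of_mem_primeFactors hl
    have hd := (hS (σ i)).dvd hx hy hz hxy hxz hyz (e i) hlP (hN ▸ hlN)
    rw [← hN] at hd
    have hv : (0 : ℤ) < (N.factorization (e i) : ℤ) := by
      exact_mod_cast hlP.factorization_pos_of_dvd hN0 hlN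
    have hle := Int.le_of_dvd (abs_pos.2 (mul_ne_zero hv.ne' (hne i))) ((dvd_abs _ _).2 hd)
    rw [abs_mul, abs_of_pos hv] at hle
    calc (((e i : ℕ)) : ℝ) ≤ (N.factorization (e i) : ℝ) * ((|ψs (σ i) (e i)| : ℤ) : ℝ) := by
          exact_mod_cast hle
      _ ≤ _ := by
          gcongr
          exact le_dNorm _ (hD _) _
  have hprod : (∏ l ∈ S, (l : ℝ)) ≤ (∏ l ∈ S, (N.factorization l : ℝ)) *
      ∏ i, dNorm (ψs i) := by
    have e1 : ∀ f : ℕ → ℝ, ∏ l ∈ S, f l = ∏ i, f (e i) := by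
      intro f
      rw [← Finset.prod_coe_sort]
      exact (Equiv.prod_comp e (fun l => f l)).symm
    rw [e1, e1, ← Equiv.prod_comp σ (fun i => dNorm (ψs i)), ← Finset.prod_mul_distrib]
    exact Finset.prod_le_prod (fun i _ => by positivity) (fun i _ => hterm i)
  have hnn : 0 ≤ ∏ i, dNorm (ψs i) := Finset.prod_nonneg fun i _ =>
    le_trans (by positivity) (le_dNorm (ψs i) (hD i) 0)
  have hf : ∀ l ∈ N.primeFactors, (1 : ℝ) ≤ (N.factorization l : ℝ) := by
    intro l hl
    have := (Nat.prime_of_mem_primeFactors hl).factorization_pos_of_dvd hN0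
      (Nat.dvd_of_mem_primeFactors hl)
    exact_mod_cast this
  have hfS : ∏ l ∈ S, (N.factorization l : ℝ) ≤
      ∏ l ∈ N.primeFactors, (N.factorization l : ℝ) := by
    refine Finset.prod_le_prod_of_subset_of_one_le hSP (fun l hl => by positivity) ?_
    intro l hl _
    exact hf l hl
  have hrad : (radN N : ℝ) = (p * q : ℕ) * ∏ l ∈ S, (l : ℝ) := by
    unfold radN
    rw [← Finset.mul_prod_erase _ _ hpN, ← Finset.mul_prod_erase _ _ hqN', ← hS']
    push_cast; ring
  rw [hrad]
  gcongr
  exact hprod.trans (by gcongr)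

theorem final_real (c R q : ℕ) (hc : 0 < c) (hq : 0 < q) (X M : ℝ) (hM1 : 1 < M) (hM2 : M < 2)
    (hrad : (c : ℝ) < (R : ℝ) ^ M) (h16 : 16 * q ^ 4 ≤ R ^ 2 * c)
    (hX : (R : ℝ) ≤ (2 * q : ℕ) * X) : (c : ℝ) ^ ((2 - M) / (4 * M)) ≤ X := by
  have hc' : (0 : ℝ) < c := by exact_mod_cast hc
  have hR : (0 : ℝ) < R := by
    rcases Nat.eq_zero_or_pos R with h | h
    · subst h
      have : 0 < 16 * q ^ 4 := by positivity
      simp at h16; omega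
    · exact_mod_cast h
  set μ := (2 - M) / (4 * M) with hμ
  have hq' : (0 : ℝ) < q := by exact_mod_cast hq
  have hX0 : 0 < X := by
    push_cast at hX
    by_contra h
    push Not at h
    nlinarith [mul_nonneg (mul_pos two_pos hq').le (neg_nonneg.2 h)]
  -- fourth powers
  have h4 : (R : ℝ) ^ 2 ≤ c * X ^ 4 := by
    have e1 : (R : ℝ) ^ 4 ≤ 16 * q ^ 4 * X ^ 4 := by
      calc (R : ℝ) ^ 4 ≤ ((2 * q : ℕ) * X) ^ 4 := by gcongr
        _ = _ := by push_cast; ring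
    have e2 : (16 * q ^ 4 : ℝ) ≤ R ^ 2 * c := by exact_mod_cast h16
    have e3 : (R : ℝ) ^ 2 * R ^ 2 ≤ R ^ 2 * (c * X ^ 4) := by
      calc (R : ℝ) ^ 2 * R ^ 2 = R ^ 4 := by ring
        _ ≤ 16 * q ^ 4 * X ^ 4 := e1
        _ ≤ R ^ 2 * c * X ^ 4 := by gcongr
        _ = _ := by ring
    exact le_of_mul_le_mul_left e3 (by positivity)
  have h5 : (c : ℝ) ^ (2 / M) ≤ (R : ℝ) ^ 2 := by
    calc (c : ℝ) ^ (2 / M) ≤ ((R : ℝ) ^ M) ^ (2 / M) := by gcongr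
      _ = (R : ℝ) ^ (2 : ℝ) := by
        rw [← Real.rpow_mul hR.le]; congr 1; field_simp
      _ = _ := by norm_num
  have h6 : ((c : ℝ) ^ μ) ^ 4 * c = (c : ℝ) ^ (2 / M) := by
    rw [← Real.rpow_natCast, ← Real.rpow_mul hc'.le]
    nth_rewrite 2 [← Real.rpow_one (c : ℝ)]
    rw [← Real.rpow_add hc']
    congr 1
    rw [hμ]; push_cast; field_simp; ring
  have h7 : ((c : ℝ) ^ μ) ^ 4 ≤ X ^ 4 := by
    have : ((c : ℝ) ^ μ) ^ 4 * c ≤ X ^ 4 * c := by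
      rw [h6]; linarith
    exact le_of_mul_le_mul_right this hc'
  exact le_of_pow_le_pow_left₀ (by norm_num) hX0.le h7

/-- existence of the second prime, arranged with `x` even -/
theorem exists_prime (x y z c : ℕ) (hx : Even x) (hy : Odd y) (hz : Odd z) (hx0 : 0 < x)
    (hyz : Nat.Coprime y z) (hc : 4 ≤ c) (hyc : y ≤ c) (hzc : z ≤ c)
    (hrel : x + y = z ∨ x + z = y ∨ y + z = x)
    (hpr : x = 1 ∨ y = 1 ∨ z = 1 → ¬ x.Prime ∧ ¬ y.Prime ∧ ¬ z.Prime)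
    (h8 : x = 8 → y = 1 → z ≠ 9) (h8' : x = 8 → z = 1 → y ≠ 9)
    (h7 : x = 8 → y = 1 → z ≠ 7) (h7' : x = 8 → z = 1 → y ≠ 7) :
    ∃ q, q.Prime ∧ (q ∣ y ∨ q ∣ z) ∧ 16 * q ^ 4 ≤ radN (x * y * z) ^ 2 * c := by
  have hy0 := hy.pos
  have hz0 := hz.pos
  by_cases hy1 : y = 1
  · by_cases hz1 : z = 1
    · exfalso
      have : x = 2 := by omega
      exact (hpr (by omega)).1 (this ▸ Nat.prime_two)
    · have := hpr (by omega)
      obtain ⟨q, hq, hqd, h⟩ := case_one x z c hx hz hx0 (by omega) hzc hc this.1 this.2.2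
        (by omega) (by intro h; have := h8 h hy1; have := h7 h hy1; omega)
      exact ⟨q, hq, Or.inr hqd, by rw [hy1, mul_one]; exact h⟩
  · by_cases hz1 : z = 1
    · have := hpr (by omega)
      obtain ⟨q, hq, hqd, h⟩ := case_one x y c hx hy hx0 (by omega) hyc hc this.1 this.2.1
        (by omega) (by intro h; have := h8' h hz1; have := h7' h hz1; omega)
      exact ⟨q, hq, Or.inl hqd, by rw [hz1, mul_one]; exact h⟩
    · exact case_two x y z c hx hy hz hx0 (by omega) (by omega) hyz hc

/-- combination, `x` even -/
theorem combine (x y z N c : ℕ) (hN : N = x * y * z) (hx : Even x) (hy : Odd y) (hz : Odd z)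
    (hx0 : 0 < x) (hxy : Nat.Coprime x y) (hxz : Nat.Coprime x z)
    (hyz : Nat.Coprime y z) (hc : 4 ≤ c) (hyc : y ≤ c) (hzc : z ≤ c)
    (hrel : x + y = z ∨ x + z = y ∨ y + z = x)
    (hpr : x = 1 ∨ y = 1 ∨ z = 1 → ¬ x.Prime ∧ ¬ y.Prime ∧ ¬ z.Prime)
    (h8 : x = 8 → y = 1 → z ≠ 9) (h8' : x = 8 → z = 1 → y ≠ 9)
    (ψs : Fin (N.primeFactors.card - 2) → (ℕ → ℤ))
    (hD : ∀ i, IsDeriv (ψs i)) (hS : ∀ i, SymRel x y z (ψs i))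
    (h0 : ∀ i l, l.Prime → ¬ l ∣ N → ψs i l = 0) (hLI : LinearIndependent ℤ ψs)
    (M : ℝ) (hM1 : 1 < M) (hM2 : M < 2) (hrad : (c : ℝ) < (radN N : ℝ) ^ M) :
    (c : ℝ) ^ ((2 - M) / (4 * M)) /
        (∏ p ∈ N.primeFactors, (N.factorization p : ℝ)) ≤ ∏ i, dNorm (ψs i) := by
  have p7 : Nat.Prime 7 := by norm_num
  have hN0 : N ≠ 0 := by
    have := hy.pos
    have := hz.pos
    rw [hN]; positivity
  obtain ⟨q, hq, hqd, h16⟩ := exists_prime x y z c hx hy hz hx0 hyz hc hyc hzc hrel hpr h8 h8'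
    (fun _ h2 h3 => (hpr (by omega)).2.2 (h3 ▸ p7))
    (fun _ h2 h3 => (hpr (by omega)).2.1 (h3 ▸ p7))
  have hpos : 0 < ∏ p ∈ N.primeFactors, (N.factorization p : ℝ) := by
    refine Finset.prod_pos fun l hl => ?_
    have := (Nat.prime_of_mem_primeFactors hl).factorization_pos_of_dvd hN0
      (Nat.dvd_of_mem_primeFactors hl)
    exact_mod_cast this
  rw [div_le_iff₀' hpos]
  rw [← hN] at h16
  refine final_real c (radN N) q (by omega) hq.pos _ M hM1 hM2 hrad h16 ?_
  rcases hqd with hqd | hqd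
  · exact core x y z N hN hx0 hy.pos hz.pos hxy hxz hyz 2 q Nat.prime_two hq hx.two_dvd hqd
      ψs hD hS h0 hLI
  · exact core x z y N (by rw [hN]; ring) hx0 hz.pos hy.pos hxz hxy hyz.symm 2 q Nat.prime_two hq
      hx.two_dvd hqd ψs hD (fun i => ⟨(hS i).2.1, (hS i).1, (hS i).2.2.symm⟩) h0 hLI

/-- Key lower bound for products of norms of derivations in `𝒯°(a,b)`. -/
theorem key_lower_bound (a b c : ℕ) (ha : 0 < a) (hb : 0 < b) (hc : 0 < c)
    (h1 : Nat.Coprime a b) (h2 : Nat.Coprime a c) (h3 : Nat.Coprime b c)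
    (habc : a + b = c)
    (hnot189 : ({a, b, c} : Multiset ℕ) ≠ {1, 8, 9})
    (hnotNq : ¬ ∃ N q : ℕ, q.Prime ∧ ({a, b, c} : Multiset ℕ) = {1, N, q})
    (ψs : Fin ((a * b * c).primeFactors.card - 2) → (ℕ → ℤ))
    (hψs : ∀ i, MemT0 a b (ψs i)) (hLI : LinearIndependent ℤ ψs)
    (M : ℝ) (hM1 : 1 < M) (hM2 : M < 2)
    (hrad : (c : ℝ) < (radN (a * b * c) : ℝ) ^ M) :
    (c : ℝ) ^ ((2 - M) / (4 * M)) /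
        (∏ p ∈ (a * b * c).primeFactors, ((a * b * c).factorization p : ℝ)) ≤
      ∏ i, dNorm (ψs i) := by
  have hpr : ∀ w, w = 1 ∧ (w = a ∨ w = b ∨ w = c) → ¬ a.Prime ∧ ¬ b.Prime ∧ ¬ c.Prime := by
    have p1 : ∀ u v w : ℕ, ({a, b, c} : Multiset ℕ) = {u, v, w} → u = 1 →
        ¬ v.Prime ∧ ¬ w.Prime := by
      intro u v w he hu
      subst hu
      refine ⟨fun hv => hnotNq ⟨w, v, hv, ?_⟩, fun hw => hnotNq ⟨v, w, hw, he⟩⟩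
      rw [he]
      simp only [Multiset.insert_eq_cons, ← Multiset.singleton_add]
      abel
    rintro w ⟨rfl, h | h | h⟩
    · have := p1 a b c rfl h.symm
      exact ⟨by rw [← h]; exact Nat.not_prime_one, this.1, this.2⟩
    · have := p1 b a c (by
        simp only [Multiset.insert_eq_cons, ← Multiset.singleton_add]; abel) h.symm
      exact ⟨this.1, by rw [← h]; exact Nat.not_prime_one, this.2⟩
    · omega
  have hc4 : 4 ≤ c := by
    by_contra hlt
    have hcp : c.Prime := by
      have : c = 2 ∨ c = 3 := by omega
      rcases this with rfl | rfl <;> norm_num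
    have : a = 1 ∨ b = 1 := by omega
    exact (hpr 1 ⟨rfl, by omega⟩).2.2 hcp
  have hD : ∀ i, IsDeriv (ψs i) := fun i => (hψs i).1.1
  have h0 : ∀ i l, l.Prime → ¬ l ∣ a * b * c → ψs i l = 0 := by
    intro i l hl hd
    exact (hψs i).1.2.1 l hl (by rw [habc]; exact hd)
  have hS : ∀ i, SymRel a b c (ψs i) := by
    intro i
    have e1 := (hψs i).1.2.2
    have e2 := (hψs i).2
    unfold Wpsi at e2
    have ec : (a : ℤ) + b = c := by exact_mod_cast habc
    rw [ec] at e1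
    refine ⟨by linear_combination e2, ?_, ?_⟩
    · rw [e1, ← ec]; linear_combination e2
    · rw [e1, ← ec]; linear_combination -e2
  have h89 : ¬ (a = 1 ∧ b = 8) ∧ ¬ (a = 8 ∧ b = 1) := by
    constructor
    · rintro ⟨rfl, rfl⟩
      subst habc; exact hnot189 rfl
    · rintro ⟨rfl, rfl⟩
      subst habc; exact hnot189 (by decide)
  have hpr' : a = 1 ∨ b = 1 ∨ c = 1 → ¬ a.Prime ∧ ¬ b.Prime ∧ ¬ c.Prime :=
    fun h => hpr 1 ⟨rfl, by omega⟩
  have odd_of : ∀ u v : ℕ, Nat.Coprime u v → Even u → Odd v := by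
    intro u v huv hu
    exact Nat.coprime_two_left.1 (Nat.Coprime.coprime_dvd_left hu.two_dvd huv)
  rcases Nat.even_or_odd a with hae | hao
  · exact combine a b c _ c rfl hae (odd_of a b h1 hae) (odd_of a c h2 hae) ha h1 h2 h3 hc4
      (by omega) le_rfl (by omega) hpr' (by omega) (by omega) ψs hD hS h0 hLI M hM1 hM2 hrad
  rcases Nat.even_or_odd b with hbe | hbo
  · exact combine b a c _ c (by ring) hbe hao (odd_of b c h3 hbe) hb h1.symm h3 h2 hc4
      (by omega) le_rfl (by omega) (fun h => have := hpr' (by omega); ⟨this.2.1, this.1, this.2.2⟩)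
      (by omega) (by omega) ψs hD
      (fun i => ⟨(hS i).1.symm, (hS i).2.2, (hS i).2.1⟩) h0 hLI M hM1 hM2 hrad
  · have hce : Even c := habc ▸ hao.add_odd hbo
    exact combine c a b _ c (by ring) hce hao hbo hc h2.symm h3.symm h1 hc4
      (by omega) (by omega) (by omega)
      (fun h => have := hpr' (by omega); ⟨this.2.2, this.1, this.2.1⟩)
      (by omega) (by omega) ψs hD
      (fun i => ⟨(hS i).2.1.symm, (hS i).2.2.symm, (hS i).1⟩) h0 hLI M hM1 hM2 hrad
end

section
/- Oesterlé's abc Conjecture implies the Small Derivatives Conjecture: suppose there is a real number M with 1 < M < 2 such that every triple of coprime positive integers a, b, c with a + b = c satisfies c < rad(abc)^M. Then for every η > 1 − (2 − M)/(4M), for all but finitely many triples of coprime positive integers (a,b,c) satisfying a + b = c and not, up to order, of the form (1, N, q) with q prime, there exists ψ ∈ 𝒯(a,b) such that a, b are ψ-independent and ‖ψ‖ < c^η. -/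
open Finset

def del (φ : ℕ → ℤ) (n : ℕ) : ℤ := ∑ p ∈ n.primeFactors, ((n / p : ℕ) : ℤ) * φ p

def VV (n : ℕ) : ℕ := ∏ p ∈ n.primeFactors, n.factorization p

lemma dpsi_nat (ψ : ℕ → ℤ) (n : ℕ) :
    dpsi ψ (n : ℤ) = ∑ p ∈ n.primeFactors, ((n / p : ℕ) : ℤ) * (n.factorization p : ℤ) * ψ p := by
  simp [dpsi]

lemma dpsi_of_del (φ ψ : ℕ → ℤ) (n N : ℕ) (hN : N ≠ 0)
    (hψ : ∀ p ∈ n.primeFactors, ψ p = ((VV N / N.factorization p : ℕ) : ℤ) * φ p)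
    (hf : ∀ p ∈ n.primeFactors, n.factorization p = N.factorization p) (hd : n ∣ N) :
    dpsi ψ (n : ℤ) = VV N * del φ n := by
  rw [dpsi_nat, del, Finset.mul_sum]
  refine Finset.sum_congr rfl fun p hp => ?_
  rw [hψ p hp, hf p hp]
  have h1 : N.factorization p ∣ VV N := by
    apply Finset.dvd_prod_of_mem
    exact Nat.primeFactors_mono hd hN hp
  obtain ⟨k, hk⟩ := h1
  have h0 : 0 < N.factorization p := by
    rw [← hf p hp]
    have := Nat.mem_primeFactors.1 hp
    exact this.1.factorization_pos_of_dvd this.2.2 this.2.1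
  rw [hk, Nat.mul_div_cancel_left _ h0]
  push_cast
  ring

lemma core_to_psi (a b : ℕ) (ha : 0 < a) (hb : 0 < b) (hab : Nat.Coprime a b) (φ : ℕ → ℤ)
    (hT : del φ (a + b) = del φ a + del φ b) (hW : (a : ℤ) * del φ b ≠ b * del φ a) (K : ℝ)
    (hK0 : 0 ≤ K)
    (hK : ∀ p ∈ (a * b * (a + b)).primeFactors, |(φ p : ℝ)| ≤ K) :
    ∃ ψ : ℕ → ℤ, MemT a b ψ ∧ Wpsi ψ (a : ℤ) (b : ℤ) ≠ 0 ∧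
      dNorm ψ ≤ VV (a * b * (a + b)) * K := by
  set N := a * b * (a + b) with hN
  have hN0 : N ≠ 0 := by positivity
  set ψ : ℕ → ℤ := fun p => if p ∈ N.primeFactors then
    ((VV N / N.factorization p : ℕ) : ℤ) * φ p else 0 with hψd
  have hac : Nat.Coprime a (a + b) := by simpa using hab
  have hbc : Nat.Coprime b (a + b) := by simpa using hab.symm
  have key : ∀ n, n ∣ N → (∀ p ∈ n.primeFactors, n.factorization p = N.factorization p) →
      dpsi ψ (n : ℤ) = VV N * del φ n := by
    intro n hn hf
    refine dpsi_of_del φ ψ n N hN0 (fun p hp => ?_) hf hn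
    simp only [hψd]
    rw [if_pos (Nat.primeFactors_mono hn hN0 hp)]
  have fac : ∀ p, N.factorization p = a.factorization p + b.factorization p
      + (a + b).factorization p := by
    intro p
    rw [hN, Nat.factorization_mul (by positivity) (by positivity),
      Nat.factorization_mul (by positivity) (by positivity)]
    rfl
  have cop : ∀ m n p : ℕ, Nat.Coprime m n → p ∈ m.primeFactors → n.factorization p = 0 := by
    intro m n p h hp
    apply Nat.factorization_eq_zero_of_not_dvd
    intro h2
    have := Nat.mem_primeFactors.1 hp
    exact this.1.one_lt.ne' (Nat.eq_one_of_dvd_coprimes h this.2.1 h2)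
  have Ka := key a ⟨b * (a + b), by rw [hN]; ring⟩ (fun p hp => by
    rw [fac, cop _ _ p hab hp, cop _ _ p hac hp]; ring)
  have Kb := key b ⟨a * (a + b), by rw [hN]; ring⟩ (fun p hp => by
    rw [fac, cop _ _ p hab.symm hp, cop _ _ p hbc hp]; ring)
  have Kc := key (a + b) ⟨a * b, by rw [hN]; ring⟩ (fun p hp => by
    rw [fac, cop _ _ p hac.symm hp, cop _ _ p hbc.symm hp]; ring)
  have hV : VV N ≠ 0 := by
    unfold VV
    rw [Finset.prod_ne_zero_iff]
    intro p hp
    have := Nat.mem_primeFactors.1 hp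
    exact (this.1.factorization_pos_of_dvd this.2.2 this.2.1).ne'
  have hb : ∀ p, |(ψ p : ℝ)| ≤ VV N * K := by
    intro p
    simp only [hψd]
    split_ifs with h
    · rw [Int.cast_mul, abs_mul, Int.cast_natCast]
      apply mul_le_mul _ (hK p h) (abs_nonneg _) (by positivity)
      rw [Nat.abs_cast]
      exact_mod_cast Nat.div_le_self _ _
    · simp; positivity
  refine ⟨ψ, ⟨⟨?_, ?_⟩, ?_, ?_⟩, ?_, ?_⟩
  · intro p hp
    simp only [hψd]
    rw [if_neg]
    intro h; exact hp (Nat.prime_of_mem_primeFactors h)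
  · refine ⟨⌈(VV N : ℝ) * K⌉, fun p => ?_⟩
    have h1 := (hb p).trans (Int.le_ceil _)
    exact_mod_cast h1
  · intro p hp hd
    simp only [hψd]
    rw [if_neg]
    intro h; exact hd (Nat.dvd_of_mem_primeFactors h)
  · rw [← Nat.cast_add, Kc, Ka, Kb, hT]; ring
  · rw [Wpsi, Ka, Kb]
    intro h
    apply hW
    have hV' : (VV N : ℤ) ≠ 0 := by exact_mod_cast hV
    apply mul_left_cancel₀ hV'
    linarith
  · unfold dNorm
    apply ciSup_le
    intro p
    exact_mod_cast hb p

lemma rep (S : Finset ℕ) (hS : S.Nonempty) : (∀ p ∈ S, p.Prime) → ∀ (X : ℤ) (t : ℝ), 0 ≤ t →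
    |(X : ℝ)| ≤ ((∏ p ∈ S, p : ℕ) : ℝ) * t →
    ∃ φ : ℕ → ℤ, ∑ p ∈ S, ((∏ x ∈ S.erase p, x : ℕ) : ℤ) * φ p = X ∧
      ∀ p ∈ S, |(φ p : ℝ)| ≤ p * (t + S.card) := by
  induction hS using Finset.Nonempty.cons_induction with
  | singleton q =>
    intro hp X t ht hX
    refine ⟨fun _ => X, by simp, ?_⟩
    intro p hpq
    simp at hpq hX ⊢
    subst hpq
    refine hX.trans ?_
    gcongr
    linarith
  | cons q S hq hS ih =>
    intro hp X t ht hX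
    have hqp : q.Prime := hp q (by simp)
    have hq0 : (0 : ℝ) < q := by exact_mod_cast hqp.pos
    set R := ∏ p ∈ S, p with hR
    have hR0 : (0 : ℝ) < R := by
      have : 0 < R := Finset.prod_pos fun p h => (hp p (by simp [h])).pos
      exact_mod_cast this
    have hcop : IsCoprime (R : ℤ) (q : ℤ) := by
      rw [Nat.isCoprime_iff_coprime]
      apply Nat.Coprime.prod_left
      intro p h
      rw [Nat.coprime_primes (hp p (by simp [h])) hqp]
      rintro rfl; exact hq h
    obtain ⟨u, v, huv⟩ := hcop
    set f : ℤ := (X * u) % q with hf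
    have hf0 : 0 ≤ f := Int.emod_nonneg _ (by exact_mod_cast hqp.ne_zero)
    have hfq : f < q := Int.emod_lt_of_pos _ (by exact_mod_cast hqp.pos)
    have hdv : (q : ℤ) ∣ X - R * f := by
      have h1 : X * u = q * (X * u / q) + f := (Int.mul_ediv_add_emod _ _).symm
      refine ⟨X * v + R * (X * u / q), ?_⟩
      linear_combination (-X) * huv + R * h1
    obtain ⟨X1, hX1⟩ := hdv
    have hf0' : (0 : ℝ) ≤ f := by exact_mod_cast hf0
    have hfq' : (f : ℝ) ≤ q := by exact_mod_cast hfq.le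
    have hX1' : (X : ℝ) - R * f = q * X1 := by exact_mod_cast hX1
    have hXX : |(X : ℝ)| ≤ q * R * t := by
      rw [Finset.prod_cons, ← hR, Nat.cast_mul] at hX; exact hX
    obtain ⟨φ, h1, h2⟩ := ih (fun p h => hp p (by simp [h])) X1 (t + 1) (by linarith) (by
      have h3 : (q : ℝ) * |(X1 : ℝ)| ≤ q * (R * (t + 1)) := by
        calc (q : ℝ) * |(X1 : ℝ)| = |(X : ℝ) - R * f| := by
              rw [hX1', abs_mul, Nat.abs_cast]
          _ ≤ |(X : ℝ)| + |(R : ℝ) * f| := abs_sub _ _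
          _ ≤ q * R * t + R * q := by
              rw [abs_of_nonneg (a := (R : ℝ) * f) (by positivity)]
              gcongr
          _ = q * (R * (t + 1)) := by ring
      exact le_of_mul_le_mul_left h3 hq0)
    refine ⟨fun p => if p = q then f else φ p, ?_, ?_⟩
    · rw [Finset.sum_cons]
      have e1 : (Finset.cons q S hq).erase q = S := Finset.erase_cons _
      have e2 : ∑ p ∈ S, ((∏ x ∈ (Finset.cons q S hq).erase p, x : ℕ) : ℤ) *
          (if p = q then f else φ p) = q * X1 := by
        rw [← h1, Finset.mul_sum]
        refine Finset.sum_congr rfl fun p hpS => ?_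
        have hpq : p ≠ q := by rintro rfl; exact hq hpS
        rw [if_neg hpq]
        rw [Finset.erase_cons_of_ne _ (Ne.symm hpq), Finset.prod_cons]
        push_cast; ring
      beta_reduce
      rw [e1, e2, ← hX1, if_pos rfl]
      ring
    · intro p hpS
      simp only [Finset.card_cons]
      push_cast
      split_ifs with h
      · subst h
        rw [abs_of_nonneg hf0']
        refine hfq'.trans ?_
        have : (0 : ℝ) ≤ S.card := by positivity
        nlinarith
      · have := h2 p (by simpa [h] using hpS)
        refine this.trans (le_of_eq ?_)
        ring

lemma radN_pos (n : ℕ) : 0 < radN n :=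
  Finset.prod_pos fun _ h => (Nat.prime_of_mem_primeFactors h).pos

lemma radN_dvd (n : ℕ) : radN n ∣ n := Nat.prod_primeFactors_dvd n

lemma radN_mul {m n : ℕ} (h : Nat.Coprime m n) : radN (m * n) = radN m * radN n := by
  unfold radN
  rw [h.primeFactors_mul, Finset.prod_union h.disjoint_primeFactors]

lemma del_congr {φ φ' : ℕ → ℤ} {n : ℕ} (h : ∀ p ∈ n.primeFactors, φ p = φ' p) :
    del φ n = del φ' n :=
  Finset.sum_congr rfl fun p hp => by rw [h p hp]

lemma rep_n (n : ℕ) (hn : 0 < n) (X : ℤ) (t : ℝ) (ht : 0 ≤ t) (h1 : n = 1 → X = 0)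
    (hX : |(X : ℝ)| ≤ (radN n : ℝ) * t) :
    ∃ φ : ℕ → ℤ, del φ n = ((n / radN n : ℕ) : ℤ) * X ∧
      ∀ p ∈ n.primeFactors, |(φ p : ℝ)| ≤ p * (t + n.primeFactors.card) := by
  by_cases hn1 : n = 1
  · refine ⟨0, ?_, ?_⟩
    · simp [del, h1 hn1]
    · simp [hn1]
  · obtain ⟨φ, h2, h3⟩ := rep n.primeFactors (Nat.nonempty_primeFactors.2 (by omega))
      (fun p hp => Nat.prime_of_mem_primeFactors hp) X t ht hX
    refine ⟨φ, ?_, h3⟩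
    rw [← h2, del, Finset.mul_sum]
    refine Finset.sum_congr rfl fun p hp => ?_
    rw [← mul_assoc]
    congr 1
    rw [← Nat.cast_mul]
    congr 1
    apply Nat.div_eq_of_eq_mul_left (Nat.prime_of_mem_primeFactors hp).pos
    rw [mul_assoc, Finset.prod_erase_mul _ _ hp]
    exact (Nat.div_mul_cancel (radN_dvd n)).symm

lemma case1 (a b : ℕ) (ha : 0 < a) (hb : 0 < b) (hab : Nat.Coprime a b) (hb1 : b ≠ 1)
    (P : ℝ) (hP : ∀ p ∈ (a * b * (a + b)).primeFactors, (p : ℝ) ≤ P) :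
    ∃ φ : ℕ → ℤ, del φ (a + b) = del φ a + del φ b ∧ (a : ℤ) * del φ b ≠ b * del φ a ∧
      ∀ p ∈ (a * b * (a + b)).primeFactors, |(φ p : ℝ)| ≤
        P * ((a + b : ℕ) / radN (a * b * (a + b)) + 1 + (a * b * (a + b)).primeFactors.card) := by
  set c := a + b with hc
  have hac : Nat.Coprime a c := by simpa [hc] using hab
  have hbc : Nat.Coprime b c := by simpa [hc] using hab.symm
  have hc0 : 0 < c := by omega
  have hN0 : a * b * c ≠ 0 := by positivity
  have hrad : radN (a * b * c) = radN a * radN b * radN c := by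
    rw [radN_mul (Nat.Coprime.mul_left hac hbc), radN_mul hab]
  obtain ⟨A, hA⟩ := radN_dvd a
  obtain ⟨B, hB⟩ := radN_dvd b
  obtain ⟨C, hC⟩ := radN_dvd c
  have hRa := radN_pos a
  have hRb := radN_pos b
  have hRc := radN_pos c
  have dA : a / radN a = A := Nat.div_eq_of_eq_mul_right hRa hA
  have dB : b / radN b = B := Nat.div_eq_of_eq_mul_right hRb hB
  have dC : c / radN c = C := Nat.div_eq_of_eq_mul_right hRc hC
  have rada1 : a = 1 → radN a = 1 := by rintro h; rw [h]; simp [radN]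
  set Ra := radN a
  set Rb := radN b
  set Rc := radN c
  have hA0 : 0 < A := Nat.pos_of_ne_zero (by rintro rfl; omega)
  have hB0 : 0 < B := Nat.pos_of_ne_zero (by rintro rfl; omega)
  have hC0 : 0 < C := Nat.pos_of_ne_zero (by rintro rfl; omega)
  have hcop : IsCoprime (Ra : ℤ) (Rb : ℤ) := by
    rw [Nat.isCoprime_iff_coprime]
    exact Nat.Coprime.of_dvd ⟨A, hA⟩ ⟨B, hB⟩ hab
  have hcop2 : IsCoprime (C : ℤ) (Rb : ℤ) := by
    rw [Nat.isCoprime_iff_coprime]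
    exact (Nat.Coprime.of_dvd ⟨B, hB⟩ ⟨Rc, by rw [hC, mul_comm]⟩ hbc).symm
  have hsum : (Rc : ℤ) * C = Ra * A + Rb * B := by
    have : Rc * C = Ra * A + Rb * B := by rw [← hA, ← hB, ← hC]
    exact_mod_cast this
  obtain ⟨u, v, huv⟩ := hcop
  set X : ℤ := (-(C * v)) % Ra with hX
  set k : ℤ := (-(C * v)) / Ra with hk
  have hXk : -(C * v) = Ra * k + X := (Int.mul_ediv_add_emod _ _).symm
  set Y : ℤ := C * u - k * Rb with hY
  have hX0 : 0 ≤ X := Int.emod_nonneg _ (by exact_mod_cast hRa.ne')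
  have hXR : X < Ra := Int.emod_lt_of_pos _ (by exact_mod_cast hRa)
  have hdet : Y * Ra - X * Rb = C := by
    rw [hY]
    linear_combination (C : ℤ) * huv + Rb * hXk
  have hdv : (C : ℤ) ∣ A * X + B * Y := by
    apply hcop2.dvd_of_dvd_mul_left
    refine ⟨Rc * Y - A, ?_⟩
    linear_combination (-Y) * hsum - A * hdet
  obtain ⟨Z, hZ⟩ := hdv
  set t : ℝ := (c : ℝ) / radN (a * b * c) + 1 with ht
  have hRa' : (0 : ℝ) < Ra := by exact_mod_cast hRa
  have hRb' : (0 : ℝ) < Rb := by exact_mod_cast hRb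
  have hRc' : (0 : ℝ) < Rc := by exact_mod_cast hRc
  have hA' : (0 : ℝ) < A := by exact_mod_cast hA0
  have hB' : (0 : ℝ) < B := by exact_mod_cast hB0
  have hC' : (0 : ℝ) < C := by exact_mod_cast hC0
  have hcr : (c : ℝ) / radN (a * b * c) = C / (Ra * Rb) := by
    rw [hrad]
    have : (c : ℝ) = Rc * C := by exact_mod_cast hC
    rw [this]
    push_cast
    field_simp
  have ht1 : 1 ≤ t := by rw [ht, hcr]; have : (0:ℝ) ≤ C / (Ra * Rb) := by positivity
                         linarith
  have hX0' : (0 : ℝ) ≤ X := by exact_mod_cast hX0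
  have hXR' : (X : ℝ) ≤ Ra := by exact_mod_cast hXR.le
  have hdet' : (Y : ℝ) * Ra - X * Rb = C := by exact_mod_cast hdet
  have hZ' : (A : ℝ) * X + B * Y = C * Z := by exact_mod_cast hZ
  have hsum' : (Rc : ℝ) * C = Ra * A + Rb * B := by exact_mod_cast hsum
  have hY0' : (0 : ℝ) ≤ Y := by
    by_contra hneg
    push Not at hneg
    nlinarith [mul_nonneg hX0' hRb'.le, mul_pos_of_neg_of_neg hneg (neg_lt_zero.2 hRa')]
  have hZ0' : (0 : ℝ) ≤ Z := by
    have : (0 : ℝ) ≤ C * Z := by rw [← hZ']; positivity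
    exact nonneg_of_mul_nonneg_right this hC'
  have bX : |(X : ℝ)| ≤ Ra * t := by
    rw [abs_of_nonneg hX0']; nlinarith
  have bY' : (Y : ℝ) ≤ Rb * t := by
    rw [ht, hcr]
    have : (Y : ℝ) = (C + X * Rb) / Ra := by rw [eq_div_iff hRa'.ne']; linarith
    rw [this]
    have e : (Rb : ℝ) * (C / (Ra * Rb) + 1) = (C + Ra * Rb) / Ra := by field_simp
    rw [e]
    gcongr
  have bY : |(Y : ℝ)| ≤ Rb * t := by rwa [abs_of_nonneg hY0']
  have bZ : |(Z : ℝ)| ≤ Rc * t := by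
    rw [abs_of_nonneg hZ0']
    have : (C : ℝ) * Z ≤ C * (Rc * t) := by
      rw [← hZ']
      rw [abs_of_nonneg hX0'] at bX
      calc (A : ℝ) * X + B * Y ≤ A * (Ra * t) + B * (Rb * t) := by gcongr
        _ = C * (Rc * t) := by linear_combination (-t) * hsum'
    exact le_of_mul_le_mul_left this hC'
  obtain ⟨f, hf1, hf2⟩ := rep_n a ha X t (by linarith)
    (by intro h; have := rada1 h; omega) bX
  obtain ⟨g, hg1, hg2⟩ := rep_n b hb Y t (by linarith) (fun h => absurd h hb1) bY
  obtain ⟨h, hh1, hh2⟩ := rep_n c hc0 Z t (by linarith) (by intro h; omega) bZ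
  rw [dA] at hf1
  rw [dB] at hg1
  rw [dC] at hh1
  set φ : ℕ → ℤ := fun p => if p ∣ a then f p else if p ∣ b then g p else h p with hφ
  have nd : ∀ m n p : ℕ, Nat.Coprime m n → p ∈ m.primeFactors → ¬ p ∣ n := by
    intro m n p h hp h2
    have := Nat.mem_primeFactors.1 hp
    exact this.1.one_lt.ne' (Nat.eq_one_of_dvd_coprimes h this.2.1 h2)
  have φa : ∀ p ∈ a.primeFactors, φ p = f p := by
    intro p hp
    simp only [hφ]
    rw [if_pos (Nat.dvd_of_mem_primeFactors hp)]
  have φb : ∀ p ∈ b.primeFactors, φ p = g p := by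
    intro p hp
    simp only [hφ]
    rw [if_neg (nd b a p hab.symm hp), if_pos (Nat.dvd_of_mem_primeFactors hp)]
  have φc : ∀ p ∈ c.primeFactors, φ p = h p := by
    intro p hp
    simp only [hφ]
    rw [if_neg (nd c a p hac.symm hp), if_neg (nd c b p hbc.symm hp)]
  have da : del φ a = A * X := by rw [del_congr φa, hf1]
  have db : del φ b = B * Y := by rw [del_congr φb, hg1]
  have dc : del φ c = C * Z := by rw [del_congr φc, hh1]
  have hC0Z : (C : ℤ) ≠ 0 := by exact_mod_cast hC0.ne'
  have hA0Z : (A : ℤ) ≠ 0 := by exact_mod_cast hA0.ne'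
  have hB0Z : (B : ℤ) ≠ 0 := by exact_mod_cast hB0.ne'
  have haZ : (a : ℤ) = Ra * A := by exact_mod_cast hA
  have hbZ : (b : ℤ) = Rb * B := by exact_mod_cast hB
  refine ⟨φ, by rw [da, db, dc, hZ], ?_, ?_⟩
  · rw [da, db, haZ, hbZ]
    intro e
    have : (A : ℤ) * B * C = 0 := by
      rw [← hdet]; linear_combination e
    exact mul_ne_zero (mul_ne_zero hA0Z hB0Z) hC0Z this
  · have fin : ∀ n p : ℕ, ∀ z : ℤ, n ∣ a * b * c → p ∈ n.primeFactors →
        |(z : ℝ)| ≤ p * (t + n.primeFactors.card) →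
        |(z : ℝ)| ≤ P * (t + (a * b * c).primeFactors.card) := by
      intro n p z hn hp hz
      have hs := Nat.primeFactors_mono hn hN0
      have h1 := hP p (hs hp)
      have h2 : (n.primeFactors.card : ℝ) ≤ (a * b * c).primeFactors.card := by
        exact Nat.cast_le.2 (Finset.card_le_card hs)
      refine hz.trans ?_
      have h5 : (0 : ℝ) ≤ p := Nat.cast_nonneg _
      have h6 : (0 : ℝ) ≤ n.primeFactors.card := Nat.cast_nonneg _
      exact mul_le_mul h1 (by linarith) (by linarith) (h5.trans h1)
    intro p hp
    have hpm := Nat.mem_primeFactors.1 hp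
    rcases (Nat.Prime.dvd_mul hpm.1).1 hpm.2.1 with h4 | h4
    · rcases (Nat.Prime.dvd_mul hpm.1).1 h4 with h5 | h5
      · have hp' : p ∈ a.primeFactors := Nat.mem_primeFactors.2 ⟨hpm.1, h5, ha.ne'⟩
        rw [φa p hp']
        exact fin a p _ ⟨b * c, by ring⟩ hp' (hf2 p hp')
      · have hp' : p ∈ b.primeFactors := Nat.mem_primeFactors.2 ⟨hpm.1, h5, hb.ne'⟩
        rw [φb p hp']
        exact fin b p _ ⟨a * c, by ring⟩ hp' (hg2 p hp')
    · have hp' : p ∈ c.primeFactors := Nat.mem_primeFactors.2 ⟨hpm.1, h4, hc0.ne'⟩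
      rw [φc p hp']
      exact fin c p _ ⟨a * b, by ring⟩ hp' (hh2 p hp')

section
attribute [local instance] Matrix.seminormedAddCommGroup
lemma siegel3 (α β γ : ℤ) (c : ℝ) (hc : 1 ≤ c) (hα : |(α : ℝ)| ≤ c) (hβ : |(β : ℝ)| ≤ c)
    (hγ : |(γ : ℝ)| ≤ c) :
    ∃ x y z : ℤ, ¬ (x = 0 ∧ y = 0 ∧ z = 0) ∧ α * x + β * y + γ * z = 0 ∧
      |(x : ℝ)| ≤ Real.sqrt (3 * c) ∧ |(y : ℝ)| ≤ Real.sqrt (3 * c) ∧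
      |(z : ℝ)| ≤ Real.sqrt (3 * c) := by
  obtain ⟨t, ht0, ht1, ht2⟩ := Int.Matrix.exists_ne_zero_int_vec_norm_le
    (!![α, β, γ] : Matrix (Fin 1) (Fin 3) ℤ) (by simp) (by simp)
  have hA : ‖(!![α, β, γ] : Matrix (Fin 1) (Fin 3) ℤ)‖ ≤ c := by
    rw [Matrix.norm_le_iff (by linarith)]
    intro i j
    fin_cases i
    fin_cases j
    · simpa [Int.norm_eq_abs] using hα
    · simpa [Int.norm_eq_abs] using hβ
    · simpa [Int.norm_eq_abs] using hγ
  have hb : ‖t‖ ≤ Real.sqrt (3 * c) := by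
    refine ht2.trans ?_
    simp only [Fintype.card_fin]
    have e : (((1 : ℕ) : ℝ) / ((3 : ℕ) - (1 : ℕ))) = 1 / 2 := by norm_num
    rw [e, ← Real.sqrt_eq_rpow]
    apply Real.sqrt_le_sqrt
    push_cast
    have := max_le hc hA
    gcongr
  refine ⟨t 0, t 1, t 2, ?_, ?_, ?_, ?_, ?_⟩
  · rintro ⟨h0, h1, h2⟩
    apply ht0
    ext i
    fin_cases i <;> simp [h0, h1, h2]
  · have := congrFun ht1 0
    simpa [Matrix.mulVec, dotProduct, Fin.sum_univ_three] using this
  all_goals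
    rw [← Int.norm_eq_abs]
    exact (norm_le_pi_norm t _).trans hb
end

def kap (n s : ℕ) : ℤ := if s ∈ n.primeFactors then ((n / s : ℕ) : ℤ) else 0

lemma kap_nonneg (n s : ℕ) : 0 ≤ kap n s := by
  unfold kap; split_ifs <;> positivity

lemma kap_le (n s : ℕ) : kap n s ≤ n := by
  unfold kap; split_ifs
  · exact_mod_cast Nat.div_le_self _ _
  · positivity

lemma kap_ne {n s : ℕ} (h : s ∈ n.primeFactors) : kap n s ≠ 0 := by
  unfold kap
  rw [if_pos h]
  have := Nat.mem_primeFactors.1 h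
  have h2 := Nat.div_pos (Nat.le_of_dvd (Nat.pos_of_ne_zero this.2.2) this.2.1) this.1.pos
  exact_mod_cast h2.ne'

lemma kap_zero {n s : ℕ} (h : ¬ s ∣ n) : kap n s = 0 := by
  unfold kap
  rw [if_neg]
  intro h2; exact h (Nat.dvd_of_mem_primeFactors h2)

lemma del_three (p q r : ℕ) (x y z : ℤ) (n : ℕ) :
    del (Pi.single p x + Pi.single q y + Pi.single r z) n
      = kap n p * x + kap n q * y + kap n r * z := by
  have h : ∀ (s : ℕ) (w : ℤ), ∑ p ∈ n.primeFactors, ((n / p : ℕ) : ℤ) * (Pi.single s w : ℕ → ℤ) p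
      = kap n s * w := by
    intro s w
    unfold kap
    simp only [Pi.single_apply, mul_ite, mul_zero, Finset.sum_ite_eq', ite_mul, zero_mul]
  unfold del
  simp only [Pi.add_apply, mul_add, Finset.sum_add_distrib]
  rw [h, h, h]

lemma fin2 (n1 n2 n3 : ℕ) (h3 : 0 < n3) (h12 : Nat.Coprime n1 n2)
    (h13 : Nat.Coprime n1 n3) (h23 : Nat.Coprime n2 n3) (q r : ℕ) (hq : q ∈ n1.primeFactors)
    (hr : r ∈ n2.primeFactors) (y z : ℤ) (l : ℚ)
    (e1 : (kap n1 q * y + kap n1 r * z : ℚ) = l * n1)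
    (e2 : (kap n2 q * y + kap n2 r * z : ℚ) = l * n2)
    (e3 : (kap n3 q * y + kap n3 r * z : ℚ) = l * n3) : y = 0 ∧ z = 0 := by
  have nd : ∀ m n p : ℕ, Nat.Coprime m n → p ∈ m.primeFactors → ¬ p ∣ n := by
    intro m n p h hp h2
    have := Nat.mem_primeFactors.1 hp
    exact this.1.one_lt.ne' (Nat.eq_one_of_dvd_coprimes h this.2.1 h2)
  rw [kap_zero (nd _ _ _ h13 hq), kap_zero (nd _ _ _ h23 hr)] at e3
  rw [kap_zero (nd _ _ _ h12.symm hr)] at e1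
  rw [kap_zero (nd _ _ _ h12 hq)] at e2
  have h3' : (n3 : ℚ) ≠ 0 := by exact_mod_cast h3.ne'
  have hl : l = 0 := by simpa [h3'] using e3.symm
  have k1 : (kap n1 q : ℚ) ≠ 0 := by exact_mod_cast kap_ne hq
  have k2 : (kap n2 r : ℚ) ≠ 0 := by exact_mod_cast kap_ne hr
  simp [hl, k1] at e1
  simp [hl, k2] at e2
  exact ⟨e1, e2⟩

lemma p_dvd (n p q r : ℕ) (hp : p ∈ n.primeFactors) (hq : q.Prime) (hr : r.Prime)
    (hqp : q ≠ p) (hrp : r ≠ p) (hp2 : ¬ p ^ 2 ∣ n) (x y z : ℤ)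
    (h : (n : ℤ) ∣ kap n p * x + kap n q * y + kap n r * z) : (p : ℤ) ∣ x := by
  have hpm := Nat.mem_primeFactors.1 hp
  have aux : ∀ s : ℕ, s.Prime → s ≠ p → (p : ℤ) ∣ kap n s := by
    intro s hs hsp
    unfold kap
    split_ifs with h1
    · have h2 := Nat.dvd_of_mem_primeFactors h1
      obtain ⟨k, hk⟩ := h2
      rw [hk, Nat.mul_div_cancel_left _ hs.pos]
      have : p ∣ s * k := hk ▸ hpm.2.1
      rcases (Nat.Prime.dvd_mul hpm.1).1 this with h3 | h3
      · exact absurd ((Nat.prime_dvd_prime_iff_eq hpm.1 hs).1 h3).symm hsp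
      · exact_mod_cast h3
    · simp
  have h1 : (p : ℤ) ∣ kap n p * x + kap n q * y + kap n r * z :=
    (Int.natCast_dvd_natCast.2 hpm.2.1).trans h
  have h2 : (p : ℤ) ∣ kap n p * x := by
    have h3 := dvd_sub (dvd_sub h1 (Dvd.dvd.mul_right (aux r hr hrp) z))
      (Dvd.dvd.mul_right (aux q hq hqp) y)
    have e3 : kap n p * x = kap n p * x + kap n q * y + kap n r * z - kap n r * z
      - kap n q * y := by ring
    rw [e3]; exact h3
  rcases (Nat.prime_iff_prime_int.1 hpm.1).dvd_or_dvd h2 with h3 | h3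
  · exfalso
    unfold kap at h3
    rw [if_pos hp] at h3
    have h4 : p ∣ n / p := by exact_mod_cast h3
    apply hp2
    rw [pow_two]
    exact (Nat.dvd_div_iff_mul_dvd hpm.2.1).1 h4
  · exact h3

lemma case2 (a b c : ℕ) (ha : 0 < a) (hb : 0 < b) (hc : a + b = c) (hab : Nat.Coprime a b)
    (p q r : ℕ) (hp : p ∈ (a * b * c).primeFactors) (hp3 : 3 * c < p ^ 2)
    (hq : q.Prime) (hr : r.Prime) (hqp : q ≠ p) (hrp : r ≠ p)
    (h : (q ∣ a ∧ r ∣ b) ∨ (q ∣ a ∧ r ∣ c) ∨ (q ∣ b ∧ r ∣ c)) :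
    ∃ φ : ℕ → ℤ, del φ c = del φ a + del φ b ∧ (a : ℤ) * del φ b ≠ b * del φ a ∧
      ∀ s, |(φ s : ℝ)| ≤ Real.sqrt (3 * c) := by
  have hac : Nat.Coprime a c := by simpa [← hc] using hab
  have hbc : Nat.Coprime b c := by simpa [← hc] using hab.symm
  have hc0 : 0 < c := by omega
  have hcZ : (a : ℤ) + b = c := by exact_mod_cast hc
  have hpm := Nat.mem_primeFactors.1 hp
  have hqr : q ≠ r := by
    rintro rfl
    apply hq.one_lt.ne'
    rcases h with h | h | h
    · exact Nat.eq_one_of_dvd_coprimes hab h.1 h.2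
    · exact Nat.eq_one_of_dvd_coprimes hac h.1 h.2
    · exact Nat.eq_one_of_dvd_coprimes hbc h.1 h.2
  have bd : ∀ s, |((kap a s + kap b s - kap c s : ℤ) : ℝ)| ≤ c := by
    intro s
    have h1 := kap_nonneg a s
    have h2 := kap_nonneg b s
    have h3 := kap_nonneg c s
    have h4 := kap_le a s
    have h5 := kap_le b s
    have h6 := kap_le c s
    have : |kap a s + kap b s - kap c s| ≤ (c : ℤ) := by
      rw [abs_le]; constructor <;> linarith
    exact_mod_cast this
  obtain ⟨x, y, z, h0, h1, hx, hy, hz⟩ := siegel3 _ _ _ (c : ℝ) (by exact_mod_cast hc0)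
    (bd p) (bd q) (bd r)
  refine ⟨Pi.single p x + Pi.single q y + Pi.single r z, ?_, ?_, ?_⟩
  · rw [del_three, del_three, del_three]
    linarith
  · rw [del_three, del_three]
    intro e
    have ec : kap c p * x + kap c q * y + kap c r * z = (kap a p * x + kap a q * y + kap a r * z)
      + (kap b p * x + kap b q * y + kap b r * z) := by linarith
    set da := kap a p * x + kap a q * y + kap a r * z with hda
    set db := kap b p * x + kap b q * y + kap b r * z with hdb
    set dc := kap c p * x + kap c q * y + kap c r * z with hdc
    have va : (a : ℤ) ∣ da :=
      (Nat.isCoprime_iff_coprime.2 hab).dvd_of_dvd_mul_left ⟨db, e.symm⟩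
    have vb : (b : ℤ) ∣ db :=
      (Nat.isCoprime_iff_coprime.2 hab.symm).dvd_of_dvd_mul_left ⟨da, e⟩
    have vc : (c : ℤ) ∣ dc := by
      apply (Nat.isCoprime_iff_coprime.2 hac.symm).dvd_of_dvd_mul_left
      refine ⟨da, ?_⟩
      rw [ec, ← hcZ]; linear_combination e
    have npn : ∀ n, 0 < n → n ≤ c → ¬ p ^ 2 ∣ n := by
      intro n hn hnc hd
      have := Nat.le_of_dvd hn hd
      omega
    have hpx : (p : ℤ) ∣ x := by
      rcases (Nat.Prime.dvd_mul hpm.1).1 hpm.2.1 with h4 | h4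
      · rcases (Nat.Prime.dvd_mul hpm.1).1 h4 with h5 | h5
        · exact p_dvd a p q r (Nat.mem_primeFactors.2 ⟨hpm.1, h5, ha.ne'⟩) hq hr hqp hrp
            (npn a ha (by omega)) x y z va
        · exact p_dvd b p q r (Nat.mem_primeFactors.2 ⟨hpm.1, h5, hb.ne'⟩) hq hr hqp hrp
            (npn b hb (by omega)) x y z vb
      · exact p_dvd c p q r (Nat.mem_primeFactors.2 ⟨hpm.1, h4, hc0.ne'⟩) hq hr hqp hrp
            (npn c hc0 le_rfl) x y z vc
    have hx0 : x = 0 := by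
      apply Int.eq_zero_of_abs_lt_dvd hpx
      have h5 : Real.sqrt (3 * c) < p := by
        rw [Real.sqrt_lt' (by exact_mod_cast hpm.1.pos)]
        exact_mod_cast hp3
      exact_mod_cast hx.trans_lt h5
    subst hx0
    have haQ : (a : ℚ) ≠ 0 := by exact_mod_cast ha.ne'
    have eQ : (a : ℚ) * db = b * da := by exact_mod_cast e
    have ecQ : (dc : ℚ) = da + db := by exact_mod_cast ec
    have hcQ : (a : ℚ) + b = c := by exact_mod_cast hc
    have l1 : (da : ℚ) = (da / a : ℚ) * a := by field_simp
    have l2 : (db : ℚ) = (da / a : ℚ) * b := by field_simp; linarith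
    have l3 : (dc : ℚ) = (da / a : ℚ) * c := by rw [ecQ, ← hcQ]; linarith
    have c1 : (kap a q * y + kap a r * z : ℚ) = (da / a : ℚ) * a := by
      rw [← l1, hda]; push_cast; ring
    have c2 : (kap b q * y + kap b r * z : ℚ) = (da / a : ℚ) * b := by
      rw [← l2, hdb]; push_cast; ring
    have c3 : (kap c q * y + kap c r * z : ℚ) = (da / a : ℚ) * c := by
      rw [← l3, hdc]; push_cast; ring
    have fin : y = 0 ∧ z = 0 := by
      rcases h with h | h | h
      · exact fin2 a b c hc0 hab hac hbc q r (Nat.mem_primeFactors.2 ⟨hq, h.1, ha.ne'⟩)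
          (Nat.mem_primeFactors.2 ⟨hr, h.2, hb.ne'⟩) y z _ c1 c2 c3
      · exact fin2 a c b hb hac hab hbc.symm q r (Nat.mem_primeFactors.2 ⟨hq, h.1, ha.ne'⟩)
          (Nat.mem_primeFactors.2 ⟨hr, h.2, hc0.ne'⟩) y z _ c1 c3 c2
      · exact fin2 b c a ha hbc hab.symm hac.symm q r (Nat.mem_primeFactors.2 ⟨hq, h.1, hb.ne'⟩)
          (Nat.mem_primeFactors.2 ⟨hr, h.2, hc0.ne'⟩) y z _ c2 c3 c1
    exact h0 ⟨rfl, fin⟩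
  · intro s
    simp only [Pi.add_apply, Pi.single_apply]
    set Q := Real.sqrt (3 * c)
    have hQ : 0 ≤ Q := Real.sqrt_nonneg _
    by_cases s1 : s = p
    · subst s1; simp [hqp.symm, hrp.symm, hx]
    · by_cases s2 : s = q
      · subst s2; simp [hqp, hqr, hy]
      · by_cases s3 : s = r
        · subst s3; simp [hrp, hqr.symm, hz]
        · simp [s1, s2, s3, hQ]

lemma exists_other (n p : ℕ) (hn : n ≠ 0) (h1 : n ≠ 1) (hp : n ≠ p) (h2 : ¬ p ^ 2 ∣ n) :
    ∃ q, q.Prime ∧ q ≠ p ∧ q ∣ n := by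
  by_contra! hcon
  have h := Nat.eq_prime_pow_of_unique_prime_dvd (p := p) hn (fun {d} hd hdn => by
    by_contra hne; exact hcon d hd hne hdn)
  set k := n.primeFactorsList.length
  rcases Nat.lt_or_ge k 2 with hk | hk
  · interval_cases k
    · simp at h; exact h1 h
    · simp at h; exact hp h
  · exact h2 (h ▸ pow_dvd_pow p hk)

lemma case2' (a b c : ℕ) (ha : 0 < a) (hb : 0 < b) (hc : a + b = c) (hab : Nat.Coprime a b)
    (hc2 : 2 < c) (hex : ¬ (∃ N q : ℕ, q.Prime ∧ ({a, b, c} : Multiset ℕ) = {1, N, q}))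
    (p : ℕ) (hp : p ∈ (a * b * c).primeFactors) (hp3 : 3 * c < p ^ 2) :
    ∃ φ : ℕ → ℤ, del φ c = del φ a + del φ b ∧ (a : ℤ) * del φ b ≠ b * del φ a ∧
      ∀ s, |(φ s : ℝ)| ≤ Real.sqrt (3 * c) := by
  have hpp := Nat.prime_of_mem_primeFactors hp
  have npn : ∀ n, 0 < n → n ≤ c → ¬ p ^ 2 ∣ n := by
    intro n hn hnc hd
    have := Nat.le_of_dvd hn hd
    omega
  have ea := exists_other a p (by omega)
  have eb := exists_other b p (by omega)
  have ec := exists_other c p (by omega)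
  have na := npn a ha (by omega)
  have nb := npn b hb (by omega)
  have nc := npn c (by omega) le_rfl
  have x1 : ¬ (a = 1 ∧ b = p) := by
    rintro ⟨rfl, rfl⟩; exact hex ⟨c, b, hpp, by ext i; simp [Multiset.count_cons, Multiset.count_singleton]; ring⟩
  have x2 : ¬ (b = 1 ∧ a = p) := by
    rintro ⟨rfl, rfl⟩; exact hex ⟨c, a, hpp, by ext i; simp [Multiset.count_cons, Multiset.count_singleton]; ring⟩
  have x3 : ¬ (a = 1 ∧ c = p) := by
    rintro ⟨rfl, rfl⟩; exact hex ⟨b, c, hpp, rfl⟩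
  have x4 : ¬ (b = 1 ∧ c = p) := by
    rintro ⟨rfl, rfl⟩; exact hex ⟨a, c, hpp, by ext i; simp [Multiset.count_cons, Multiset.count_singleton]; ring⟩
  have x5 : ¬ (a = p ∧ b = p) := by
    rintro ⟨rfl, rfl⟩
    exact hpp.one_lt.ne' (by simpa using hab)
  by_cases A : a = 1 ∨ a = p
  · have hb' : b ≠ 1 ∧ b ≠ p := by omega
    have hc' : c ≠ 1 ∧ c ≠ p := by omega
    obtain ⟨q, q1, q2, q3⟩ := eb hb'.1 hb'.2 nb
    obtain ⟨r, r1, r2, r3⟩ := ec hc'.1 hc'.2 nc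
    exact case2 a b c ha hb hc hab p q r hp hp3 q1 r1 q2 r2 (Or.inr (Or.inr ⟨q3, r3⟩))
  · push Not at A
    obtain ⟨q, q1, q2, q3⟩ := ea A.1 A.2 na
    by_cases B : b = 1 ∨ b = p
    · have hc' : c ≠ 1 ∧ c ≠ p := by omega
      obtain ⟨r, r1, r2, r3⟩ := ec hc'.1 hc'.2 nc
      exact case2 a b c ha hb hc hab p q r hp hp3 q1 r1 q2 r2 (Or.inr (Or.inl ⟨q3, r3⟩))
    · push Not at B
      obtain ⟨r, r1, r2, r3⟩ := eb B.1 B.2 nb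
      exact case2 a b c ha hb hc hab p q r hp hp3 q1 r1 q2 r2 (Or.inl ⟨q3, r3⟩)

lemma lin_le_two_rpow (ε : ℝ) (hε : 0 < ε) (v : ℕ) :
    (v : ℝ) ≤ (max 1 (1 / (ε * Real.log 2))) * (2 : ℝ) ^ (ε * v) := by
  have hl : 0 < Real.log 2 := Real.log_pos (by norm_num)
  have h1 : Real.log 2 * (ε * v) ≤ (2 : ℝ) ^ (ε * v) := by
    rw [Real.rpow_def_of_pos (by norm_num)]
    linarith [Real.add_one_le_exp (Real.log 2 * (ε * v))]
  calc (v : ℝ) = (1 / (ε * Real.log 2)) * (Real.log 2 * (ε * v)) := by field_simp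
    _ ≤ (max 1 (1 / (ε * Real.log 2))) * (2 : ℝ) ^ (ε * v) := by
      apply mul_le_mul (le_max_right _ _) h1 (by positivity) (by positivity)

lemma VV_bound (ε : ℝ) (hε : 0 < ε) : ∃ C : ℝ, 1 ≤ C ∧ ∀ n : ℕ, n ≠ 0 →
    (VV n : ℝ) ≤ C * (n : ℝ) ^ ε := by
  set C1 := max 1 (1 / (ε * Real.log 2)) with hC1
  have hC11 : 1 ≤ C1 := le_max_left _ _
  obtain ⟨K, hK⟩ := exists_nat_ge ((2 : ℝ) ^ (1 / ε))
  refine ⟨C1 ^ K, one_le_pow₀ hC11, fun n hn => ?_⟩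
  have hprod : (n : ℝ) ^ ε = ∏ p ∈ n.primeFactors, ((p : ℝ) ^ (ε * n.factorization p)) := by
    conv_lhs => rw [← Nat.prod_factorization_pow_eq_self hn]
    rw [Finsupp.prod, Nat.support_factorization]
    push_cast
    rw [← Real.finsetProd_rpow _ _ (fun i _ => by positivity)]
    refine Finset.prod_congr rfl fun p _ => ?_
    rw [← Real.rpow_natCast_mul (by positivity), mul_comm]
  have h1 : (VV n : ℝ) ≤ ∏ p ∈ n.primeFactors,
      ((if p < K then C1 else 1) * (p : ℝ) ^ (ε * n.factorization p)) := by
    unfold VV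
    push_cast
    apply Finset.prod_le_prod
    · intro i _; positivity
    · intro p hp
      have hp2 : (2 : ℝ) ≤ p := by exact_mod_cast (Nat.prime_of_mem_primeFactors hp).two_le
      split_ifs with h
      · refine (lin_le_two_rpow ε hε _).trans ?_
        rw [← hC1]
        gcongr
      · rw [one_mul]
        have h3 : (2 : ℝ) ≤ (p : ℝ) ^ ε := by
          have h4 : (2 : ℝ) ^ (1 / ε) ≤ p := hK.trans (by exact_mod_cast not_lt.1 h)
          calc (2 : ℝ) = ((2 : ℝ) ^ (1 / ε)) ^ ε := by
                rw [← Real.rpow_mul (by norm_num), one_div_mul_cancel hε.ne', Real.rpow_one]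
            _ ≤ _ := by gcongr
        rw [Real.rpow_mul (by positivity), Real.rpow_natCast]
        calc ((n.factorization p : ℕ) : ℝ) ≤ (2 : ℝ) ^ (n.factorization p) := by
              exact_mod_cast Nat.lt_two_pow_self.le
          _ ≤ _ := by gcongr
  refine h1.trans ?_
  rw [Finset.prod_mul_distrib, ← hprod]
  gcongr
  rw [Finset.prod_ite]
  simp only [Finset.prod_const, one_pow, mul_one]
  apply pow_le_pow_right₀ hC11
  calc _ ≤ (Finset.range K).card := by
        apply Finset.card_le_card
        intro x hx
        simp at hx
        simpa using hx.2
    _ = K := by simp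

lemma card_bound (ε : ℝ) (hε : 0 < ε) (n : ℕ) (hn : n ≠ 0) :
    (n.primeFactors.card : ℝ) ≤ (max 1 (1 / (ε * Real.log 2))) * (n : ℝ) ^ ε := by
  refine (lin_le_two_rpow ε hε _).trans ?_
  have h2 : 2 ^ n.primeFactors.card ≤ n := by
    calc 2 ^ n.primeFactors.card ≤ ∏ p ∈ n.primeFactors, p :=
          Finset.pow_card_le_prod _ _ _ fun p hp => (Nat.prime_of_mem_primeFactors hp).two_le
      _ ≤ n := Nat.le_of_dvd (Nat.pos_of_ne_zero hn) (radN_dvd n)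
  have h3 : (2 : ℝ) ^ n.primeFactors.card ≤ n := by exact_mod_cast h2
  rw [mul_comm ε (n.primeFactors.card : ℝ), Real.rpow_mul (by norm_num), Real.rpow_natCast]
  gcongr

/-- Oesterlé's abc Conjecture implies the Small Derivatives Conjecture. -/
theorem sdc_of_oesterle_abc (M : ℝ) (hM1 : 1 < M) (hM2 : M < 2)
    (habc : ∀ a b c : ℕ, 0 < a → 0 < b → 0 < c → Nat.Coprime a b → a + b = c →
      (c : ℝ) < (radN (a * b * c) : ℝ) ^ M)
    (η : ℝ) (hη : 1 - (2 - M) / (4 * M) < η) : SDC η := by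
  have hM0 : 0 < M := by linarith
  set η0 : ℝ := 1 - (2 - M) / (4 * M) with hη0
  set δ : ℝ := 1 / M - 1 / 2 with hδ
  have hδ0 : 0 < δ := by
    have : 1 / 2 < 1 / M := by gcongr
    linarith
  have hM' : 0 < 1 - 1 / M := by
    have : 1 / M < 1 := by rw [div_lt_one hM0]; exact hM1
    linarith
  have hη0' : η0 = 1 - δ / 2 := by rw [hη0, hδ]; field_simp; ring
  have hη0'' : η0 = (1 / 2 + δ / 2) + (1 - 1 / M) := by rw [hη0']; rw [hδ]; ring
  have hη0h : 1 / 2 ≤ η0 := by rw [hη0'']; linarith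
  set ε : ℝ := (η - η0) / 8 with hε
  have hε0 : 0 < ε := by rw [hε]; linarith
  have hηε : η = (η0 + 3 * ε) + 5 * ε := by rw [hε]; ring
  obtain ⟨C1, hC1, hV⟩ := VV_bound ε hε0
  set ε2 : ℝ := (1 - 1 / M) / 3 with hε2
  have hε20 : 0 < ε2 := by positivity
  set C2 : ℝ := max 1 (1 / (ε2 * Real.log 2)) with hC2
  have hC21 : 1 ≤ C2 := le_max_left _ _
  set D : ℝ := C1 * (4 + C2) with hD
  have ev : ∀ᶠ c : ℕ in Filter.atTop, D < (c : ℝ) ^ (5 * ε) ∧ 3 < (c : ℝ) ^ δ ∧ 2 < c := by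
    have t1 : Filter.Tendsto (fun c : ℕ => (c : ℝ) ^ (5 * ε)) Filter.atTop Filter.atTop :=
      (tendsto_rpow_atTop (by positivity)).comp tendsto_natCast_atTop_atTop
    have t2 : Filter.Tendsto (fun c : ℕ => (c : ℝ) ^ δ) Filter.atTop Filter.atTop :=
      (tendsto_rpow_atTop hδ0).comp tendsto_natCast_atTop_atTop
    exact (t1.eventually_gt_atTop D).and ((t2.eventually_gt_atTop 3).and
      (Filter.eventually_gt_atTop 2))
  obtain ⟨c0, hc0⟩ := Filter.eventually_atTop.1 ev
  apply Set.Finite.subset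
    (((Finset.range c0) ×ˢ ((Finset.range c0) ×ˢ (Finset.range c0))).finite_toSet)
  rintro ⟨a, b, c⟩ ⟨ha, hb, hc, hab, hex, hno⟩
  simp only at ha hb hc hab hex hno
  suffices hlt : c < c0 by
    simp only [Finset.coe_product, Set.mem_prod, Finset.mem_coe, Finset.mem_range]
    omega
  by_contra hge
  push Not at hge
  obtain ⟨hcD, hc3, hc2⟩ := hc0 c hge
  apply hno
  have hcpos : (0 : ℝ) < c := by exact_mod_cast (by omega : 0 < c)
  have hc1 : (1 : ℝ) ≤ c := by exact_mod_cast (by omega : 1 ≤ c)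
  set N := a * b * c with hN
  have hcn : 0 < c := by omega
  have hN0 : N ≠ 0 := by positivity
  have hNc : (N : ℝ) ≤ (c : ℝ) ^ (3 : ℝ) := by
    have : N ≤ c ^ 3 := by
      calc N = a * b * c := rfl
        _ ≤ c * c * c := by gcongr <;> omega
        _ = c ^ 3 := by ring
    have h2 : (N : ℝ) ≤ (c : ℝ) ^ 3 := by exact_mod_cast this
    rw [show (3 : ℝ) = ((3 : ℕ) : ℝ) by norm_num, Real.rpow_natCast]
    exact h2
  have hNp : ∀ e : ℝ, 0 ≤ e → (N : ℝ) ^ e ≤ (c : ℝ) ^ (3 * e) := by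
    intro e he
    rw [Real.rpow_mul hcpos.le]
    exact Real.rpow_le_rpow (by positivity) hNc he
  have hVN : (VV N : ℝ) ≤ C1 * (c : ℝ) ^ (3 * ε) :=
    (hV N hN0).trans (mul_le_mul_of_nonneg_left (hNp ε hε0.le) (by linarith))
  suffices hcore : ∃ φ : ℕ → ℤ, del φ c = del φ a + del φ b ∧ (a : ℤ) * del φ b ≠ b * del φ a ∧
      ∀ p ∈ N.primeFactors, |(φ p : ℝ)| ≤ (4 + C2) * (c : ℝ) ^ η0 by
    obtain ⟨φ, h1, h2, h3⟩ := hcore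
    obtain ⟨ψ, k1, k2, k3⟩ := core_to_psi a b ha hb hab φ (by rw [hc]; exact h1) h2
      ((4 + C2) * (c : ℝ) ^ η0) (by positivity) (by rw [hc]; exact h3)
    refine ⟨ψ, k1, k2, k3.trans_lt ?_⟩
    rw [hc]
    calc (VV N : ℝ) * ((4 + C2) * (c : ℝ) ^ η0)
        ≤ (C1 * (c : ℝ) ^ (3 * ε)) * ((4 + C2) * (c : ℝ) ^ η0) := by gcongr
      _ = D * (c : ℝ) ^ (η0 + 3 * ε) := by rw [hD, Real.rpow_add hcpos]; ring
      _ < (c : ℝ) ^ (5 * ε) * (c : ℝ) ^ (η0 + 3 * ε) := by gcongr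
      _ = (c : ℝ) ^ η := by rw [hηε, Real.rpow_add hcpos (η0 + 3 * ε)]; ring
  set P : ℝ := (c : ℝ) ^ (1 / 2 + δ / 2) with hP
  by_cases hsm : ∀ p ∈ N.primeFactors, (p : ℝ) ≤ P
  · have hR := habc a b c ha hb hcn hab hc
    rw [← hN] at hR
    have hRpos : (0 : ℝ) < radN N := by exact_mod_cast radN_pos N
    have hRM : (c : ℝ) ^ (1 / M) ≤ radN N := by
      calc (c : ℝ) ^ (1 / M) ≤ ((radN N : ℝ) ^ M) ^ (1 / M) := by gcongr
        _ = radN N := by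
          rw [← Real.rpow_mul hRpos.le, mul_one_div_cancel hM0.ne', Real.rpow_one]
    have hq : (c : ℝ) / radN N ≤ (c : ℝ) ^ (1 - 1 / M) := by
      rw [Real.rpow_sub hcpos, Real.rpow_one]
      gcongr
    have h1c : 1 ≤ (c : ℝ) ^ (1 - 1 / M) := Real.one_le_rpow hc1 hM'.le
    have hcard : (N.primeFactors.card : ℝ) ≤ C2 * (c : ℝ) ^ (1 - 1 / M) := by
      refine (card_bound ε2 hε20 N hN0).trans ?_
      have := hNp ε2 hε20.le
      rw [show 3 * ε2 = 1 - 1 / M by rw [hε2]; ring] at this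
      exact mul_le_mul_of_nonneg_left this (by linarith)
    have hP0 : 0 ≤ P := by positivity
    have hfin : P * ((c : ℝ) / radN N + 1 + N.primeFactors.card) ≤ (4 + C2) * (c : ℝ) ^ η0 := by
      calc P * ((c : ℝ) / radN N + 1 + N.primeFactors.card)
          ≤ P * ((4 + C2) * (c : ℝ) ^ (1 - 1 / M)) := by
            apply mul_le_mul_of_nonneg_left _ hP0
            linarith
        _ = _ := by rw [hη0'', Real.rpow_add hcpos, hP]; ring
    by_cases hb1 : b = 1
    · have e1 : b * a * (b + a) = N := by rw [hN, ← hc]; ring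
      have e2 : b + a = c := by omega
      obtain ⟨φ, h1, h2, h3⟩ := case1 b a hb ha hab.symm (by omega) P (by rw [e1]; exact hsm)
      rw [e1, e2] at h3
      rw [e2] at h1
      exact ⟨φ, by rw [h1, add_comm], h2.symm, fun p hp => (h3 p hp).trans hfin⟩
    · obtain ⟨φ, h1, h2, h3⟩ := case1 a b ha hb hab hb1 P (by rw [hc]; exact hsm)
      rw [hc] at h1 h3
      exact ⟨φ, h1, h2, fun p hp => (h3 p hp).trans hfin⟩
  · push Not at hsm
    obtain ⟨p, hp, hpP⟩ := hsm
    have hp3 : 3 * c < p ^ 2 := by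
      have : (3 : ℝ) * c < (p : ℝ) ^ 2 := by
        calc (3 : ℝ) * c < (c : ℝ) ^ δ * c := by gcongr
          _ = P ^ 2 := by
            rw [hP, ← Real.rpow_mul_natCast hcpos.le]
            rw [show (1 / 2 + δ / 2) * ((2 : ℕ) : ℝ) = δ + 1 by push_cast; ring,
              Real.rpow_add hcpos, Real.rpow_one]
          _ ≤ (p : ℝ) ^ 2 := by gcongr
      exact_mod_cast this
    obtain ⟨φ, h1, h2, h3⟩ := case2' a b c ha hb hc hab hc2 hex p hp hp3
    refine ⟨φ, h1, h2, fun s _ => (h3 s).trans ?_⟩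
    calc Real.sqrt (3 * c) ≤ Real.sqrt (4 * c) := by gcongr; norm_num
      _ = 2 * (c : ℝ) ^ (1 / 2 : ℝ) := by
        rw [Real.sqrt_mul (by norm_num), ← Real.sqrt_eq_rpow,
          show (4 : ℝ) = 2 ^ 2 by norm_num, Real.sqrt_sq (by norm_num)]
      _ ≤ (4 + C2) * (c : ℝ) ^ η0 := by
        apply mul_le_mul (by linarith) (Real.rpow_le_rpow_of_exponent_le hc1 hη0h)
          (by positivity) (by linarith)
end
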